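/- arXiv:2509.16692 — 2 statements merged into one kernel-verified Lean document; each statement's English description precedes it below -/
import Mathlib

section
/- Let Ω ⊂ ℝ² be a bounded open set, let m : Ω → S¹ be measurable with div m = 0 in the sense of distributions, and assume m ∈ B^{1/(2+α)}_{2+α,∞}(Ω) for some α ∈ (0,1). Then there is a constant C = C(α) > 0 such that (⋁_{Φ ∈ ENT, ‖Φ‖_{C^{1,α}} ≤ 1} |div Φ(m)|)(Ω) ≤ C ‖m‖^{2+α}_{B^{1/(2+α)}_{2+α,∞}(Ω)}, where the supremum of measures is taken over all Φ ∈ ENT with ‖Φ‖_{C^{1,α}} ≤ 1; in particular each such div Φ(m) is a finite Radon measure and the supremum measure is finite. -/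
open MeasureTheory Metric Filter Set Bornology
open scoped ENNReal NNReal Topology Real

noncomputable section

namespace Eikonal

/-! ### Basic geometric objects on `ℝ² ≃ ℂ` -/

/-- The point `e^{iθ}` of the unit circle, viewed as a complex number. -/
def circ (θ : ℝ) : ℂ := Complex.exp (θ * Complex.I)

/-- The real scalar product of `ℝ² ≃ ℂ`. -/
def dotR (z w : ℂ) : ℝ := z.re * w.re + z.im * w.im

/-- Smooth compactly supported test functions in the open set `Ω`. -/
def TestFun (Ω : Set ℂ) (ζ : ℂ → ℝ) : Prop :=
  ContDiff ℝ (⊤ : ℕ∞) ζ ∧ HasCompactSupport ζ ∧ tsupport ζ ⊆ Ω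

/-- `C¹` compactly supported test functions in `Ω`. -/
def TestFun1 (Ω : Set ℂ) (ζ : ℂ → ℝ) : Prop :=
  ContDiff ℝ 1 ζ ∧ HasCompactSupport ζ ∧ tsupport ζ ⊆ Ω

/-- `div m = 0` in the sense of distributions on `Ω`:
`∫_Ω m·∇ζ = 0` for all test functions `ζ`, where `m·∇ζ (x) = Dζ(x)[m x]`. -/
def DivFree (Ω : Set ℂ) (m : ℂ → ℂ) : Prop :=
  ∀ ζ : ℂ → ℝ, TestFun Ω ζ → (∫ x in Ω, fderiv ℝ ζ x (m x)) = 0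

/-- Weak solution of the eikonal equation on `Ω` : `|m| = 1` a.e. and `div m = 0` in `𝒟'(Ω)`. -/
def EikonalSol (Ω : Set ℂ) (m : ℂ → ℂ) : Prop :=
  AEStronglyMeasurable m (volume.restrict Ω) ∧
    (∀ᵐ x ∂(volume.restrict Ω), ‖m x‖ = 1) ∧ DivFree Ω m

/-! ### Besov seminorms (finite–difference characterization), with values in `ℝ≥0∞` -/

/-- The Besov seminorm `|m|_{B^s_{p,∞}(Ω)} = sup_{h ≠ 0} |h|^{-s} ‖m(·+h) - m‖_{L^p(Ω ∩ (Ω-h))}`. -/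
def besovE (Ω : Set ℂ) (p s : ℝ) (m : ℂ → ℂ) : ℝ≥0∞ :=
  ⨆ h : {h : ℂ // h ≠ 0},
    (‖h.1‖₊ : ℝ≥0∞) ^ (-s) *
      (∫⁻ x in Ω ∩ {x | x + h.1 ∈ Ω}, (‖m (x + h.1) - m x‖₊ : ℝ≥0∞) ^ p) ^ (1/p)

/-- The `L^p(Ω)` norm, with values in `ℝ≥0∞`. -/
def LpE (Ω : Set ℂ) (p : ℝ) (m : ℂ → ℂ) : ℝ≥0∞ :=
  (∫⁻ x in Ω, (‖m x‖₊ : ℝ≥0∞) ^ p) ^ (1/p)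

/-- The Besov norm `‖m‖_{B^s_{p,∞}(Ω)} = ‖m‖_{L^p(Ω)} + |m|_{B^s_{p,∞}(Ω)}`. -/
def besovNormE (Ω : Set ℂ) (p s : ℝ) (m : ℂ → ℂ) : ℝ≥0∞ := LpE Ω p m + besovE Ω p s m

/-! ### Entropies -/

/-- `Φ ∈ ENT`, recorded through the angular parametrization `θ ↦ Φ(e^{iθ})` together with its
derivative `φ'` : the derivative exists everywhere, is Lipschitz (i.e. `Φ ∈ C^{1,1}(S¹)`), and
satisfies the entropy condition `(d/dθ) Φ(e^{iθ}) · e^{iθ} = 0`. -/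
def IsEnt (Φ : ℂ → ℂ) (φ' : ℝ → ℂ) : Prop :=
  (∀ θ : ℝ, HasDerivAt (fun t => Φ (circ t)) (φ' θ) θ) ∧
    (∃ L : ℝ≥0, LipschitzWith L φ') ∧
    ∀ θ : ℝ, dotR (φ' θ) (circ θ) = 0

/-- `Φ ∈ ENT` with `‖Φ‖_{C^{1,1}} ≤ 1`. -/
def EntC11Ball (Φ : ℂ → ℂ) : Prop :=
  ∃ φ' : ℝ → ℂ, IsEnt Φ φ' ∧ (∀ θ, ‖Φ (circ θ)‖ ≤ 1) ∧ (∀ θ, ‖φ' θ‖ ≤ 1) ∧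
    LipschitzWith 1 φ'

/-- `Φ ∈ ENT` with `‖Φ‖_{C^{1,α}} ≤ 1`. -/
def EntC1aBall (α : ℝ) (Φ : ℂ → ℂ) : Prop :=
  ∃ φ' : ℝ → ℂ, IsEnt Φ φ' ∧ (∀ θ, ‖Φ (circ θ)‖ ≤ 1) ∧ (∀ θ, ‖φ' θ‖ ≤ 1) ∧
    ∀ θ₁ θ₂ : ℝ, ‖φ' θ₁ - φ' θ₂‖ ≤ |θ₁ - θ₂| ^ α

/-- `Φ ∈ ẼNT`: an entropy whose angular derivative is `π`-antiperiodic
(odd entropies plus constants). -/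
def EntTilde (Φ : ℂ → ℂ) : Prop :=
  ∃ φ' : ℝ → ℂ, IsEnt Φ φ' ∧ ∀ θ : ℝ, φ' (θ + π) = - φ' θ

/-- `Φ ∈ ẼNT` with `‖Φ‖_{C^{1,α}} ≤ 1`. -/
def EntTildeC1aBall (α : ℝ) (Φ : ℂ → ℂ) : Prop :=
  ∃ φ' : ℝ → ℂ, IsEnt Φ φ' ∧ (∀ θ, ‖Φ (circ θ)‖ ≤ 1) ∧ (∀ θ, ‖φ' θ‖ ≤ 1) ∧
    (∀ θ₁ θ₂ : ℝ, ‖φ' θ₁ - φ' θ₂‖ ≤ |θ₁ - θ₂| ^ α) ∧ ∀ θ : ℝ, φ' (θ + π) = - φ' θ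

/-! ### Entropy productions as measures -/

/-- Integral of a function against a signed measure. -/
def sInt {X : Type*} [MeasurableSpace X] (σ : MeasureTheory.SignedMeasure X) (f : X → ℝ) : ℝ :=
  (∫ x, f x ∂σ.toJordanDecomposition.posPart) - ∫ x, f x ∂σ.toJordanDecomposition.negPart

/-- The (finite Radon) signed measure `μ` represents the distribution
`div Φ(m) : ζ ↦ -∫_Ω Φ(m)·∇ζ`. -/
def RepresentsDiv (Ω : Set ℂ) (m Φ : ℂ → ℂ) (μ : MeasureTheory.SignedMeasure ℂ) : Prop :=
  ∀ ζ : ℂ → ℝ, TestFun Ω ζ → -(∫ x in Ω, fderiv ℝ ζ x (Φ (m x))) = sInt μ ζ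

/-- The supremum measure `ν = ⋁ {|div Φ(m)| : Φ ∈ ENT, ‖Φ‖_{C^{1,1}} ≤ 1}`. -/
def entVarC11 (Ω : Set ℂ) (m : ℂ → ℂ) : Measure ℂ :=
  ⨆ Φ : {Φ : ℂ → ℂ // EntC11Ball Φ},
    ⨆ μ : {μ : MeasureTheory.SignedMeasure ℂ // RepresentsDiv Ω m Φ.1 μ}, μ.1.totalVariation

/-- The supremum measure `⋁ {|div Φ(m)| : Φ ∈ ENT, ‖Φ‖_{C^{1,α}} ≤ 1}`. -/
def entVarC1a (α : ℝ) (Ω : Set ℂ) (m : ℂ → ℂ) : Measure ℂ :=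
  ⨆ Φ : {Φ : ℂ → ℂ // EntC1aBall α Φ},
    ⨆ μ : {μ : MeasureTheory.SignedMeasure ℂ // RepresentsDiv Ω m Φ.1 μ}, μ.1.totalVariation

/-- The supremum measure `⋁ {|div Φ(m)| : Φ ∈ ẼNT, ‖Φ‖_{C^{1,α}} ≤ 1}`. -/
def entVarTildeC1a (α : ℝ) (Ω : Set ℂ) (m : ℂ → ℂ) : Measure ℂ :=
  ⨆ Φ : {Φ : ℂ → ℂ // EntTildeC1aBall α Φ},
    ⨆ μ : {μ : MeasureTheory.SignedMeasure ℂ // RepresentsDiv Ω m Φ.1 μ}, μ.1.totalVariation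

/-- The jump set `J_m = {x ∈ Ω : limsup_{r→0} ν(B_r(x))/r > 0}`. -/
def jumpSet (Ω : Set ℂ) (m : ℂ → ℂ) : Set ℂ :=
  {x ∈ Ω | 0 < Filter.limsup
    (fun r : ℝ => entVarC11 Ω m (Metric.ball x r) / ENNReal.ofReal r) (𝓝[>] (0:ℝ))}

/-- A set `J ⊆ ℂ` is (countably) `1`-rectifiable: up to an `H¹`-null set it is covered by
countably many Lipschitz images of `ℝ`. -/
def Rect1 (J : Set ℂ) : Prop :=
  ∃ (f : ℕ → ℝ → ℂ) (K : ℕ → ℝ≥0), (∀ n, LipschitzWith (K n) (f n)) ∧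
    μH[1] (J \ ⋃ n, Set.range (f n)) = 0

/-- `n, m⁺, m⁻` are a measure-theoretic unit normal and one-sided `L¹` traces of `m`
at `H¹`-a.e. point of the jump set `J_m`. -/
def TraceData (Ω : Set ℂ) (m n mp mm : ℂ → ℂ) : Prop :=
  ∀ᵐ x ∂((μH[1] : Measure ℂ).restrict (jumpSet Ω m)),
    ‖n x‖ = 1 ∧ ‖mp x‖ = 1 ∧ ‖mm x‖ = 1 ∧
    Filter.Tendsto
      (fun r : ℝ => (∫ y in Metric.ball x r ∩ {y | 0 < dotR (y - x) (n x)}, ‖m y - mp x‖) / r^2)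
      (𝓝[>] (0:ℝ)) (𝓝 0) ∧
    Filter.Tendsto
      (fun r : ℝ => (∫ y in Metric.ball x r ∩ {y | dotR (y - x) (n x) < 0}, ‖m y - mm x‖) / r^2)
      (𝓝[>] (0:ℝ)) (𝓝 0)

/-- The subset `J_m^δ ⊆ J_m` of jumps of (angular) amplitude larger than `δ`, defined through
trace functions `m⁺ = mp`, `m⁻ = mm`. -/
def Jdelta (Ω : Set ℂ) (m mp mm : ℂ → ℂ) (δ : ℝ) : Set ℂ :=
  {x ∈ jumpSet Ω m | δ < Real.arccos (dotR (mp x) (mm x))}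

/-! ### Mollifiers -/

/-- A mollifier: `ρ ∈ C_c¹(B₁)`, `ρ ≥ 0`, `∫ ρ = 1`, `|∇ρ| ≤ 2`. -/
def Mollifier (ρ : ℂ → ℝ) : Prop :=
  ContDiff ℝ 1 ρ ∧ HasCompactSupport ρ ∧ tsupport ρ ⊆ Metric.ball 0 1 ∧
    (∀ x, 0 ≤ ρ x) ∧ (∫ x, ρ x) = 1 ∧ ∀ x, ‖fderiv ℝ ρ x‖ ≤ 2

/-- The mollification `m_ε = m * ρ_ε`, where `ρ_ε(y) = ε⁻² ρ(y/ε)`. -/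
def mollify (ρ : ℂ → ℝ) (ε : ℝ) (m : ℂ → ℂ) (x : ℂ) : ℂ :=
  ∫ y, ((ε^2)⁻¹ * ρ (ε⁻¹ • y)) • m (x - y)

/-! ### The kinetic formulation -/

/-- `χ(x,s) = 1` if `e^{is}·m(x) > 0` and `0` otherwise. -/
def chi (m : ℂ → ℂ) (x : ℂ) (s : ℝ) : ℝ := if 0 < dotR (circ s) (m x) then 1 else 0

/-- Test functions for the kinetic equation on `Ω × 𝕋` (`𝕋 = ℝ/2πℤ`): smooth, `2π`-periodic in
the kinetic variable, compactly supported inside `Ω` in the space variable. -/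
def KineticTest (Ω : Set ℂ) (φ : ℂ → ℝ → ℝ) : Prop :=
  ContDiff ℝ (⊤ : ℕ∞) (fun p : ℂ × ℝ => φ p.1 p.2) ∧ (∀ x s, φ x (s + 2*π) = φ x s) ∧
    ∃ K : Set ℂ, IsCompact K ∧ K ⊆ Ω ∧ ∀ x ∉ K, ∀ s, φ x s = 0

/-- `σ` is a kinetic measure for `m` : it is a finite signed (Radon) measure on `Ω × 𝕋`
(realized as `Ω × [0,2π)`) such that `e^{is}·∇ₓχ = ∂ₛσ` in `𝒟'(Ω × 𝕋)`. -/
def IsKineticMeasure (Ω : Set ℂ) (m : ℂ → ℂ) (σ : MeasureTheory.SignedMeasure (ℂ × ℝ)) : Prop :=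
  σ.totalVariation (Ω ×ˢ Set.Ico 0 (2*π))ᶜ = 0 ∧
    ∀ φ : ℂ → ℝ → ℝ, KineticTest Ω φ →
      (∫ x in Ω, ∫ s in Set.Ico 0 (2*π), chi m x s * fderiv ℝ (fun y => φ y s) x (circ s))
        = - sInt σ (fun p => deriv (fun s => φ p.1 s) p.2)

/-- `σ` is the kinetic measure of minimal total variation. -/
def IsMinKinetic (Ω : Set ℂ) (m : ℂ → ℂ) (σ : MeasureTheory.SignedMeasure (ℂ × ℝ)) : Prop :=
  IsKineticMeasure Ω m σ ∧
    ∀ σ' : MeasureTheory.SignedMeasure (ℂ × ℝ), IsKineticMeasure Ω m σ' →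
      σ.totalVariation Set.univ ≤ σ'.totalVariation Set.univ

/-- `ν_min = (p_x)_♯ |σ_min|`. -/
def nuMin (σ : MeasureTheory.SignedMeasure (ℂ × ℝ)) : Measure ℂ :=
  σ.totalVariation.map Prod.fst

/-- The entropy `Φ_ψ(z) = ∫_𝕋 1_{e^{is}·z>0} ψ(s) e^{is} ds` associated with `ψ : 𝕋 → ℝ`. -/
def PhiPsi (ψ : ℝ → ℝ) (z : ℂ) : ℂ :=
  ∫ s in Set.Ico 0 (2*π), {s' : ℝ | 0 < dotR (circ s') z}.indicator (fun s' => ψ s' • circ s') s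

/-! ### Lagrangian representations -/

/-- A (candidate) Lagrangian trajectory: a time interval `(tm, tp)`, a spatial component `x`,
a lifted angular component `s`, and the derivative measure `Ds` of `s`. -/
structure Curve where
  tm : ℝ
  tp : ℝ
  x : ℝ → ℂ
  s : ℝ → ℝ
  Ds : MeasureTheory.SignedMeasure ℝ

instance : MeasurableSpace Curve := ⊤

/-- The open time interval of a curve. -/
def Curve.I (γ : Curve) : Set ℝ := Set.Ioo γ.tm γ.tp

/-- A curve is admissible: `0 ≤ tm ≤ tp ≤ T`, `γ_x` Lipschitz with values in `Ω̄`, `γ_s`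
right-continuous of bounded variation with derivative measure `Ds` carried by the time interval. -/
def Curve.Valid (T : ℝ) (Ω : Set ℂ) (γ : Curve) : Prop :=
  0 ≤ γ.tm ∧ γ.tm ≤ γ.tp ∧ γ.tp ≤ T ∧
    (∃ L : ℝ≥0, LipschitzOnWith L γ.x (Set.Icc γ.tm γ.tp)) ∧
    (∀ t ∈ Set.Icc γ.tm γ.tp, γ.x t ∈ closure Ω) ∧
    (∀ t ∈ γ.I, Filter.Tendsto γ.s (𝓝[>] t) (𝓝 (γ.s t))) ∧
    (∀ a ∈ γ.I, ∀ b ∈ γ.I, a ≤ b → γ.s b - γ.s a = γ.Ds (Set.Ioc a b)) ∧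
    γ.Ds.totalVariation γ.Iᶜ = 0

/-- Reduction mod `2π` to `[0, 2π)`. -/
def wrap (s : ℝ) : ℝ := s - 2*π*(⌊s/(2*π)⌋ : ℝ)

/-- The set of atoms of a signed measure on `ℝ`. -/
def atomSet (μ : MeasureTheory.SignedMeasure ℝ) : Set ℝ := {t | μ.totalVariation {t} ≠ 0}

/-- `|D^j v|`: the jump (atomic) part of the total variation of a derivative measure. -/
def jumpTV (μ : MeasureTheory.SignedMeasure ℝ) : Measure ℝ :=
  μ.totalVariation.restrict (atomSet μ)

/-- `|D̃ v|`: the diffuse (continuous) part of the total variation of a derivative measure. -/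
def diffTV (μ : MeasureTheory.SignedMeasure ℝ) : Measure ℝ :=
  μ.totalVariation.restrict (atomSet μ)ᶜ

/-- `ω` is a Lagrangian representation of `m` on `[0,T]`. -/
def IsLagRep (T : ℝ) (Ω : Set ℂ) (m : ℂ → ℂ) (ω : Measure Curve) : Prop :=
  (∀ᵐ γ ∂ω, γ.Valid T Ω) ∧
  (∀ t ∈ Set.Ioo (0:ℝ) T,
    Measure.map (fun γ : Curve => (γ.x t, wrap (γ.s t))) (ω.restrict {γ : Curve | t ∈ γ.I})
      = ((volume.restrict Ω).prod (volume.restrict (Set.Ico 0 (2*π)))).restrict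
          {p : ℂ × ℝ | 0 < dotR (circ p.2) (m p.1)}) ∧
  (∀ᵐ γ ∂ω, ∀ᵐ t ∂(volume.restrict γ.I), HasDerivAt γ.x (circ (γ.s t)) t) ∧
  (∫⁻ γ, γ.Ds.totalVariation Set.univ ∂ω) < ⊤ ∧
  (∀ᵐ γ ∂ω, (0 < γ.tm → γ.x γ.tm ∈ frontier Ω) ∧ (γ.tp < T → γ.x γ.tp ∈ frontier Ω))

/-- `ω` is a minimal Lagrangian representation of `m`, relative to the minimal kinetic
measure `σmin`. -/
def IsMinLagRep (T : ℝ) (Ω : Set ℂ) (m : ℂ → ℂ) (σmin : MeasureTheory.SignedMeasure (ℂ × ℝ))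
    (ω : Measure Curve) : Prop :=
  IsLagRep T Ω m ω ∧
    (∫⁻ γ, γ.Ds.totalVariation Set.univ ∂ω) = ENNReal.ofReal T * σmin.totalVariation Set.univ

/-- A bounded open set of class `C^{1,1}`: near each boundary point, `Ω` is the subgraph of a
`C^{1,1}` function in a suitable orthonormal frame. -/
def C11Domain (Ω : Set ℂ) : Prop :=
  ∀ z ∈ frontier Ω, ∃ (e : ℂ) (r : ℝ) (f f' : ℝ → ℝ) (L : ℝ≥0),
    0 < r ∧ ‖e‖ = 1 ∧ (∀ t, HasDerivAt f (f' t) t) ∧ LipschitzWith L f' ∧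
    ∀ y ∈ Metric.ball z r, (y ∈ Ω ↔ dotR (y - z) e < f (dotR (y - z) (Complex.I * e)))

/-- `x` is a Lebesgue point of `f` with value `c`, with respect to the measure `ρ`. -/
def LebesguePtVal (ρ : Measure ℂ) (f : ℂ → ℝ) (x : ℂ) (c : ℝ) : Prop :=
  f x = c ∧
    Filter.Tendsto
      (fun r : ℝ => (∫⁻ y in Metric.ball x r, ENNReal.ofReal |f y - c| ∂ρ) / ρ (Metric.ball x r))
      (𝓝[>] (0:ℝ)) (𝓝 0)

/-! ## STATEMENT 1 -/


open scoped CompactlySupported in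
/-- Weak limit along an ultrafilter. -/
theorem exists_weak_limit (g : ℕ → ℂ → ℝ) (K : ℝ) (hg0 : ∀ n x, 0 ≤ g n x)
    (hgi : ∀ n, Integrable (g n)) (hgK : ∀ n, ∫ x, g n x ≤ K) :
    ∃ ν : Measure ℂ, ν univ ≤ ENNReal.ofReal K ∧
      ∀ f : ℂ → ℝ, Continuous f → HasCompactSupport f →
        Tendsto (fun n => ∫ x, f x * g n x) (hyperfilter ℕ : Filter ℕ) (𝓝 (∫ x, f x ∂ν)) := by
  have hbd : ∀ f : ℂ → ℝ, Continuous f → ∀ B : ℝ, (∀ x, |f x| ≤ B) → ∀ n,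
      Integrable (fun x => f x * g n x) ∧ |∫ x, f x * g n x| ≤ B * K := by
    intro f hf B hB n
    have hB0 : 0 ≤ B := (abs_nonneg _).trans (hB 0)
    have hi : Integrable (fun x => f x * g n x) :=
      (hgi n).bdd_mul hf.aestronglyMeasurable (c := B) (Eventually.of_forall hB)
    refine ⟨hi, ?_⟩
    calc |∫ x, f x * g n x| ≤ ∫ x, |f x * g n x| := abs_integral_le_integral_abs
      _ ≤ ∫ x, B * g n x := by
        refine integral_mono hi.abs ((hgi n).const_mul B) fun x => ?_
        simp only [abs_mul, abs_of_nonneg (hg0 n x)]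
        exact mul_le_mul_of_nonneg_right (hB x) (hg0 n x)
      _ = B * ∫ x, g n x := integral_const_mul _ _
      _ ≤ B * K := mul_le_mul_of_nonneg_left (hgK n) hB0
  have hbdd : ∀ f : C_c(ℂ, ℝ), ∃ B : ℝ, ∀ x, |f x| ≤ B := fun f =>
    f.hasCompactSupport.exists_bound_of_continuous f.continuous
  have hlim : ∀ f : C_c(ℂ, ℝ), ∃ l : ℝ,
      Tendsto (fun n => ∫ x, f x * g n x) (hyperfilter ℕ : Filter ℕ) (𝓝 l) := by
    intro f
    obtain ⟨B, hB⟩ := hbdd f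
    obtain ⟨l, -, hl⟩ := (isCompact_Icc (a := -(B * K)) (b := B * K)).ultrafilter_le_nhds
      ((hyperfilter ℕ).map (fun n => ∫ x, f x * g n x)) (by
        rw [le_principal_iff]
        refine Filter.mem_map.2 (Filter.univ_mem' fun n => ?_)
        exact abs_le.1 ((hbd f f.continuous B hB n).2))
    exact ⟨l, hl⟩
  choose L hL using hlim
  have hadd : ∀ f h, L (f + h) = L f + L h := by
    intro f h
    refine tendsto_nhds_unique (hL (f + h)) (((hL f).add (hL h)).congr fun n => ?_)
    obtain ⟨B, hB⟩ := hbdd f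
    obtain ⟨B', hB'⟩ := hbdd h
    rw [← integral_add (hbd f f.continuous B hB n).1 (hbd h h.continuous B' hB' n).1]
    congr 1; ext x; simp [add_mul]
  have hsmul : ∀ (c : ℝ) f, L (c • f) = c * L f := by
    intro c f
    refine tendsto_nhds_unique (hL (c • f)) (((hL f).const_mul c).congr fun n => ?_)
    rw [← integral_const_mul]
    congr 1; ext x; simp [mul_assoc]
  let Λ0 : C_c(ℂ, ℝ) →ₗ[ℝ] ℝ := { toFun := L, map_add' := hadd, map_smul' := hsmul }
  let Λ : C_c(ℂ, ℝ) →ₚ[ℝ] ℝ := PositiveLinearMap.mk₀ Λ0 (by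
    intro f hf
    refine ge_of_tendsto (hL f) (Eventually.of_forall fun n => ?_)
    exact integral_nonneg fun x => mul_nonneg (hf x) (hg0 n x))
  have hΛ : ∀ f, Λ f = L f := fun f => rfl
  refine ⟨RealRMK.rieszMeasure Λ, ?_, ?_⟩
  · have hc : ∀ n : ℕ, RealRMK.rieszMeasure Λ (closedBall 0 n) ≤ ENNReal.ofReal K := by
      intro n
      obtain ⟨f, hf1, -, hfc, hf01⟩ := exists_continuous_one_zero_of_isCompact
        (isCompact_closedBall (0:ℂ) n) isClosed_empty (disjoint_empty _)
      let F : C_c(ℂ, ℝ) := ⟨f, hfc⟩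
      have hF : ∀ x, F x = f x := fun x => rfl
      refine (RealRMK.rieszMeasure_le_of_eq_one Λ (f := F) (fun x => (hf01 x).1)
        (isCompact_closedBall (0:ℂ) n) (fun x hx => hf1 hx)).trans ?_
      refine ENNReal.ofReal_le_ofReal ?_
      rw [hΛ]
      refine le_of_tendsto (hL F) (Eventually.of_forall fun n => ?_)
      have := (hbd F F.continuous 1 (fun x => abs_le.2 ⟨by linarith [(hf01 x).1, hF x],
        (hf01 x).2⟩) n).2
      rw [one_mul] at this
      exact (le_abs_self _).trans this
    have : (univ : Set ℂ) = ⋃ n : ℕ, closedBall 0 n := (iUnion_closedBall_nat 0).symm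
    rw [this, Monotone.measure_iUnion]
    · exact iSup_le hc
    · intro a b hab
      exact closedBall_subset_closedBall (by exact_mod_cast hab)
  · intro f hf hfc
    let F : C_c(ℂ, ℝ) := ⟨⟨f, hf⟩, hfc⟩
    have := RealRMK.integral_rieszMeasure Λ F
    have h2 : ∫ x, f x ∂(RealRMK.rieszMeasure Λ) = L F := this
    rw [h2]
    exact hL F

/-- `sInt` for a difference of finite measures. -/
theorem sInt_sub (μ₁ μ₂ : Measure ℂ) [IsFiniteMeasure μ₁] [IsFiniteMeasure μ₂]
    (f : ℂ → ℝ) (hf : Continuous f) (hfc : HasCompactSupport f) :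
    sInt (μ₁.toSignedMeasure - μ₂.toSignedMeasure) f = ∫ x, f x ∂μ₁ - ∫ x, f x ∂μ₂ := by
  set s := μ₁.toSignedMeasure - μ₂.toSignedMeasure with hs
  set j := s.toJordanDecomposition with hj
  have h1 : j.toSignedMeasure = s := SignedMeasure.toSignedMeasure_toJordanDecomposition s
  have hIntg : ∀ ν : Measure ℂ, IsFiniteMeasure ν → Integrable f ν := fun ν _ =>
    hf.integrable_of_hasCompactSupport hfc
  have h2 : j.posPart + μ₂ = μ₁ + j.negPart := by
    rw [← Measure.toSignedMeasure_eq_toSignedMeasure_iff]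
    rw [Measure.toSignedMeasure_add, Measure.toSignedMeasure_add]
    have : j.posPart.toSignedMeasure - j.negPart.toSignedMeasure
      = μ₁.toSignedMeasure - μ₂.toSignedMeasure := h1
    rw [sub_eq_sub_iff_add_eq_add] at this
    exact this
  have h3 : ∫ x, f x ∂(j.posPart + μ₂) = ∫ x, f x ∂(μ₁ + j.negPart) := by rw [h2]
  rw [integral_add_measure (hIntg _ inferInstance) (hIntg _ inferInstance),
    integral_add_measure (hIntg _ inferInstance) (hIntg _ inferInstance)] at h3
  unfold sInt
  linarith

theorem exists_bump {K U : Set ℂ} (hK : IsCompact K) (hU : IsOpen U) (hKU : K ⊆ U) :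
    ∃ ζ : ℂ → ℝ, TestFun U ζ ∧ (∀ x, 0 ≤ ζ x ∧ ζ x ≤ 1) ∧ ∀ x ∈ K, ζ x = 1 := by
  obtain ⟨K', hK', h1, h2⟩ := exists_compact_between hK hU hKU
  obtain ⟨f, hf0, hf1, hf⟩ := exists_contMDiffMap_zero_one_of_isClosed (n := (⊤ : ℕ∞))
    (modelWithCornersSelf ℝ ℂ)
    (isOpen_interior (s := K')).isClosed_compl hK.isClosed
    (disjoint_left.2 fun x hx hx' => hx (h1 hx'))
  have hsub : tsupport f ⊆ K' := by
    refine closure_minimal (fun x hx => ?_) hK'.isClosed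
    by_contra hx'
    exact hx (hf0 (fun h => hx' (interior_subset h)))
  exact ⟨f, ⟨f.contMDiff.contDiff, HasCompactSupport.of_support_subset_isCompact hK'
    ((subset_tsupport _).trans hsub), hsub.trans h2⟩, fun x => hf x, fun x hx => hf1 hx⟩

theorem approx_bump_aux (lam τ : Measure ℂ) [IsFiniteMeasure lam] [IsFiniteMeasure τ] (hle : lam ≤ τ)
    {K E U : Set ℂ} (hK : IsCompact K) (hU : IsOpen U) (hKE : K ⊆ E) (hEU : E ⊆ U)
    {ε : ℝ} (hτ : τ.real (U \ K) ≤ ε) {ζ : ℂ → ℝ} (hζ : TestFun U ζ)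
    (h01 : ∀ x, 0 ≤ ζ x ∧ ζ x ≤ 1) (h1 : ∀ x ∈ K, ζ x = 1) :
    |∫ x, ζ x ∂lam - lam.real E| ≤ ε := by
  have hi : Integrable ζ lam := hζ.1.continuous.integrable_of_hasCompactSupport hζ.2.1
  have a1 : lam.real K ≤ ∫ x, ζ x ∂lam := by
    rw [← integral_indicator_one hK.measurableSet]
    refine integral_mono ((integrable_const (1:ℝ)).indicator hK.measurableSet) hi fun x => ?_
    by_cases hx : x ∈ K
    · simp [hx, h1 x hx]
    · simp [hx, (h01 x).1]
  have a2 : ∫ x, ζ x ∂lam ≤ lam.real U := by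
    rw [← integral_indicator_one hU.measurableSet]
    refine integral_mono hi ((integrable_const (1:ℝ)).indicator hU.measurableSet) fun x => ?_
    by_cases hx : x ∈ U
    · simp [hx, (h01 x).2]
    · have : ζ x = 0 := image_eq_zero_of_notMem_tsupport fun h => hx (hζ.2.2 h)
      simp [hx, this]
  have a3 : lam.real K ≤ lam.real E := measureReal_mono hKE
  have a4 : lam.real E ≤ lam.real U := measureReal_mono hEU
  have a5 : lam.real (U \ K) = lam.real U - lam.real K :=
    measureReal_sdiff (hKE.trans hEU) hK.measurableSet
  have a6 : lam.real (U \ K) ≤ τ.real (U \ K) :=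
    ENNReal.toReal_mono (measure_ne_top _ _) (hle _)
  rw [abs_le]; constructor <;> linarith

theorem tv_le {Ω : Set ℂ} (hΩ : IsOpen Ω) (μ : SignedMeasure ℂ) (ν : Measure ℂ)
    [IsFiniteMeasure ν] (h : ∀ ζ, TestFun Ω ζ → |sInt μ ζ| ≤ ∫ x, |ζ x| ∂ν)
    {A : Set ℂ} (hA : MeasurableSet A) (hAΩ : A ⊆ Ω) : μ.totalVariation A ≤ ν A := by
  set p := μ.toJordanDecomposition.posPart with hp
  set q := μ.toJordanDecomposition.negPart with hq
  have key : ∀ E : Set ℂ, MeasurableSet E → E ⊆ Ω → |p.real E - q.real E| ≤ ν.real E := by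
    intro E hE hEΩ
    refine le_of_forall_pos_le_add fun ε hε => ?_
    set τ := p + q + ν with hτ
    have hε' : ENNReal.ofReal (ε / 8) ≠ 0 := by simp; positivity
    obtain ⟨K, hKE, hK, hKτ⟩ := hE.exists_isCompact_lt_add (μ := τ) (measure_ne_top _ _) hε'
    obtain ⟨U₀, hEU₀, hU₀, hU₀τ⟩ := E.exists_isOpen_lt_add (μ := τ) (measure_ne_top _ _) hε'
    set U := U₀ ∩ Ω with hU
    have hUo : IsOpen U := hU₀.inter hΩ
    have hEU : E ⊆ U := subset_inter hEU₀ hEΩ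
    have r1 : τ.real E ≤ τ.real K + ε / 8 := by
      have := ENNReal.toReal_mono (by finiteness) hKτ.le
      rwa [ENNReal.toReal_add (measure_ne_top _ _) (by finiteness),
        ENNReal.toReal_ofReal (by positivity)] at this
    have r2 : τ.real U₀ ≤ τ.real E + ε / 8 := by
      have := ENNReal.toReal_mono (by finiteness) hU₀τ.le
      rwa [ENNReal.toReal_add (measure_ne_top _ _) (by finiteness),
        ENNReal.toReal_ofReal (by positivity)] at this
    have r3 : τ.real (U \ K) ≤ ε / 4 := by
      rw [measureReal_sdiff (hKE.trans hEU) hK.measurableSet]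
      have : τ.real U ≤ τ.real U₀ := measureReal_mono inter_subset_left
      linarith
    obtain ⟨ζ, hζ, h01, h1⟩ := exists_bump hK hUo (hKE.trans hEU)
    have hpτ : p ≤ τ := by
      rw [hτ, add_assoc]; exact Measure.le_add_right le_rfl
    have hqτ : q ≤ τ := by
      rw [hτ, add_assoc]; exact Measure.le_add_left (Measure.le_add_right le_rfl)
    have hντ : ν ≤ τ := Measure.le_add_left le_rfl
    have b1 := abs_le.1 (approx_bump_aux p τ hpτ hK hUo hKE hEU r3 hζ h01 h1)
    have b2 := abs_le.1 (approx_bump_aux q τ hqτ hK hUo hKE hEU r3 hζ h01 h1)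
    have b3 := abs_le.1 (approx_bump_aux ν τ hντ hK hUo hKE hEU r3 hζ h01 h1)
    have b4 := h ζ ⟨hζ.1, hζ.2.1, hζ.2.2.trans inter_subset_right⟩
    have : ∫ x, |ζ x| ∂ν = ∫ x, ζ x ∂ν := by
      congr 1; ext x; exact abs_of_nonneg (h01 x).1
    rw [this] at b4
    have b5 := abs_le.1 b4
    unfold sInt at b5
    rw [abs_le]
    constructor <;> linarith [b1.1, b1.2, b2.1, b2.2, b3.1, b3.2, b5.1, b5.2]
  obtain ⟨S, hS, hpS, hqS⟩ := μ.toJordanDecomposition.mutuallySingular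
  have e1 : p A ≤ ν (A \ S) := by
    have h0 : q (A \ S) = 0 := measure_mono_null (fun x hx => hx.2) hqS
    have h1 := key (A \ S) (hA.diff hS) (sdiff_subset.trans hAΩ)
    have h2 : q.real (A \ S) = 0 := by simp [Measure.real, h0]
    rw [h2, sub_zero] at h1
    have h3 := (le_abs_self _).trans h1
    have h4 : p (A \ S) ≤ ν (A \ S) :=
      (ENNReal.toReal_le_toReal (measure_ne_top _ _) (measure_ne_top _ _)).1 h3
    calc p A ≤ p (A \ S) + p S := by
          refine (measure_mono ?_).trans (measure_union_le _ _)
          intro x hx; by_cases hxS : x ∈ S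
          · exact Or.inr hxS
          · exact Or.inl ⟨hx, hxS⟩
      _ = p (A \ S) := by rw [hpS, add_zero]
      _ ≤ _ := h4
  have e2 : q A ≤ ν (A ∩ S) := by
    have h0 : p (A ∩ S) = 0 := measure_mono_null (fun x hx => hx.2) hpS
    have h1 := key (A ∩ S) (hA.inter hS) (inter_subset_left.trans hAΩ)
    have h2 : p.real (A ∩ S) = 0 := by simp [Measure.real, h0]
    rw [h2, zero_sub, abs_neg] at h1
    have h3 := (le_abs_self _).trans h1
    have h4 : q (A ∩ S) ≤ ν (A ∩ S) :=
      (ENNReal.toReal_le_toReal (measure_ne_top _ _) (measure_ne_top _ _)).1 h3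
    calc q A ≤ q (A ∩ S) + q Sᶜ := by
          refine (measure_mono ?_).trans (measure_union_le _ _)
          intro x hx; by_cases hxS : x ∈ S
          · exact Or.inl ⟨hx, hxS⟩
          · exact Or.inr hxS
      _ = q (A ∩ S) := by rw [hqS, add_zero]
      _ ≤ _ := h4
  calc μ.totalVariation A = p A + q A := by
        simp [SignedMeasure.totalVariation, hp, hq]
    _ ≤ ν (A \ S) + ν (A ∩ S) := add_le_add e1 e2
    _ = ν A := by rw [add_comm]; exact measure_inter_add_sdiff A hS

/-- The space of test functions as a submodule. -/
def testSub (Ω : Set ℂ) : Submodule ℝ (ℂ → ℝ) where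
  carrier := {ζ | TestFun Ω ζ}
  add_mem' := by
    rintro f g ⟨hf, hf1, hf2⟩ ⟨hg, hg1, hg2⟩
    exact ⟨hf.add hg, hf1.add hg1, (tsupport_add f g).trans (union_subset hf2 hg2)⟩
  zero_mem' := ⟨contDiff_const, HasCompactSupport.zero, by simp [tsupport]⟩
  smul_mem' := by
    rintro c f ⟨hf, hf1, hf2⟩
    exact ⟨hf.const_smul c, hf1.smul_left (f := fun _ => c),
      (tsupport_smul_subset_right (fun _ => c) f).trans hf2⟩

theorem exists_repr {Ω : Set ℂ} (ν : Measure ℂ) [IsFiniteMeasure ν]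
    (T : testSub Ω →ₗ[ℝ] ℝ) (hT : ∀ ζ : testSub Ω, |T ζ| ≤ ∫ x, |ζ.1 x| ∂ν) :
    ∃ μ : SignedMeasure ℂ, ∀ ζ : testSub Ω, T ζ = sInt μ ζ.1 := by
  have hmem : ∀ ζ : testSub Ω, MemLp ζ.1 2 ν := fun ζ =>
    ζ.2.1.continuous.memLp_of_hasCompactSupport ζ.2.2.1
  let ι : testSub Ω →ₗ[ℝ] Lp ℝ 2 ν :=
    { toFun := fun ζ => (hmem ζ).toLp ζ.1
      map_add' := fun f g => rfl
      map_smul' := fun c f => rfl }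
  set C : ℝ := Real.sqrt (ν.real univ) with hC
  have hbound : ∀ ζ : testSub Ω, |T ζ| ≤ C * ‖ι ζ‖ := by
    intro ζ
    refine (hT ζ).trans ?_
    have h1 : Integrable ζ.1 ν := ζ.2.1.continuous.integrable_of_hasCompactSupport ζ.2.2.1
    have h2 : ‖ι ζ‖ = (eLpNorm ζ.1 2 ν).toReal := Lp.norm_toLp _ (hmem ζ)
    have h3 : ∫ x, |ζ.1 x| ∂ν = (eLpNorm ζ.1 1 ν).toReal := by
      rw [eLpNorm_one_eq_lintegral_enorm, ← integral_norm_eq_lintegral_enorm h1.1]; rfl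
    rw [h2, h3]
    have h4 := eLpNorm_le_eLpNorm_mul_rpow_measure_univ (μ := ν) (p := 1) (q := 2) (f := ζ.1)
      (by norm_num) h1.1
    have h5 := ENNReal.toReal_mono (by
      refine ENNReal.mul_ne_top (hmem ζ).2.ne ?_
      refine ENNReal.rpow_ne_top_of_nonneg (by norm_num) (measure_ne_top _ _)) h4
    rw [ENNReal.toReal_mul, ← ENNReal.toReal_rpow] at h5
    refine h5.trans (le_of_eq ?_)
    rw [mul_comm, hC, Real.sqrt_eq_rpow, Measure.real]
    norm_num
  have hker : LinearMap.ker ι ≤ LinearMap.ker T := by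
    intro ζ hζ
    rw [LinearMap.mem_ker] at hζ ⊢
    have := hbound ζ
    rw [hζ, norm_zero, mul_zero] at this
    exact abs_nonpos_iff.1 this
  let T' : LinearMap.range ι →ₗ[ℝ] ℝ :=
    ((LinearMap.ker ι).liftQ T hker).comp (ι.quotKerEquivRange.symm : _ →ₗ[ℝ] _)
  have hT' : ∀ ζ, T' ⟨ι ζ, LinearMap.mem_range_self ι ζ⟩ = T ζ := by
    intro ζ
    have : ι.quotKerEquivRange.symm ⟨ι ζ, LinearMap.mem_range_self ι ζ⟩
        = (LinearMap.ker ι).mkQ ζ := LinearMap.quotKerEquivRange_symm_apply_image ι ζ _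
    simp only [T', LinearMap.comp_apply, LinearEquiv.coe_coe, this]
    simp
  let Tc : StrongDual ℝ (LinearMap.range ι) := T'.mkContinuous C (by
    rintro ⟨_, ζ, rfl⟩
    rw [hT' ζ]; exact hbound ζ)
  obtain ⟨G, hG, -⟩ := _root_.exists_extension_norm_eq (LinearMap.range ι) Tc
  set f : Lp ℝ 2 ν := (InnerProductSpace.toDual ℝ (Lp ℝ 2 ν)).symm G with hf
  have hTf : ∀ ζ, T ζ = ∫ x, ζ.1 x * f x ∂ν := by
    intro ζ
    have h1 : G (ι ζ) = T ζ := by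
      have := hG ⟨ι ζ, LinearMap.mem_range_self ι ζ⟩
      rw [← hT' ζ]; exact this
    rw [← h1]
    have h2 : inner ℝ f (ι ζ) = G (ι ζ) := by
      rw [hf, InnerProductSpace.toDual_symm_apply]
    rw [← h2, L2.inner_def]
    refine integral_congr_ae ?_
    filter_upwards [(hmem ζ).coeFn_toLp] with x hx
    have : (ι ζ : ℂ → ℝ) x = ζ.1 x := hx
    simp [this]
  have hfi : Integrable f ν := (Lp.memLp f).integrable (by norm_num)
  have hfm : AEMeasurable f ν := hfi.aemeasurable
  have hfm' : AEMeasurable (fun x => -f x) ν := hfm.neg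
  have : IsFiniteMeasure (ν.withDensity fun x => ENNReal.ofReal (f x)) :=
    isFiniteMeasure_withDensity_ofReal hfi.2
  have : IsFiniteMeasure (ν.withDensity fun x => ENNReal.ofReal (-f x)) :=
    isFiniteMeasure_withDensity_ofReal hfi.neg.2
  refine ⟨(ν.withDensity fun x => ENNReal.ofReal (f x)).toSignedMeasure -
    (ν.withDensity fun x => ENNReal.ofReal (-f x)).toSignedMeasure, fun ζ => ?_⟩
  rw [sInt_sub _ _ _ ζ.2.1.continuous ζ.2.2.1, hTf ζ,
    integral_withDensity_eq_integral_toReal_smul₀ hfm.ennreal_ofReal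
      (Eventually.of_forall fun x => ENNReal.ofReal_lt_top),
    integral_withDensity_eq_integral_toReal_smul₀ hfm'.ennreal_ofReal
      (Eventually.of_forall fun x => ENNReal.ofReal_lt_top)]
  have hζb : ∃ B, ∀ x, ‖ζ.1 x‖ ≤ B := ζ.2.2.1.exists_bound_of_continuous ζ.2.1.continuous
  obtain ⟨B, hB⟩ := hζb
  have hζm : AEStronglyMeasurable ζ.1 ν := ζ.2.1.continuous.aestronglyMeasurable
  rw [← integral_sub]
  · congr 1; ext x
    simp only [Pi.neg_apply, ENNReal.toReal_ofReal', smul_eq_mul]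
    have : f x = max (f x) 0 - max (-f x) 0 := by
      rcases le_total (f x) 0 with h | h
      · rw [max_eq_right h, max_eq_left (by linarith)]; ring
      · rw [max_eq_left h, max_eq_right (by linarith)]; ring
    conv_lhs => rw [this]
    ring
  · simp only [ENNReal.toReal_ofReal', smul_eq_mul]
    exact hfi.pos_part.mul_bdd hζm (Eventually.of_forall hB)
  · simp only [ENNReal.toReal_ofReal', smul_eq_mul]
    exact hfi.neg.pos_part.mul_bdd hζm (Eventually.of_forall hB)

section
theorem norm_circ (θ : ℝ) : ‖circ θ‖ = 1 := Complex.norm_exp_ofReal_mul_I θ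

theorem circ_add (a b : ℝ) : circ (a + b) = circ a * circ b := by
  unfold circ; rw [← Complex.exp_add]; congr 1; push_cast; ring

theorem circ_arg_mul (z : ℂ) : (‖z‖ : ℂ) * circ (Complex.arg z) = z :=
  Complex.norm_mul_exp_arg_mul_I z

theorem circ_arg_of_norm_one {z : ℂ} (hz : ‖z‖ = 1) : circ (Complex.arg z) = z := by
  have := circ_arg_mul z
  rwa [hz, Complex.ofReal_one, one_mul] at this

/-- The homogeneous extension of an entropy. -/
def extPhi (Φ : ℂ → ℂ) (z : ℂ) : ℂ := (‖z‖ ^ 3 : ℝ) • Φ (circ (Complex.arg z))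

/-- The vector field `Ψ` associated with an entropy. -/
def Psi (Φ : ℂ → ℂ) (φ' : ℝ → ℂ) (z : ℂ) : ℂ :=
  (‖z‖ / 2 : ℝ) • (3 * Φ (circ (Complex.arg z)) + Complex.I * φ' (Complex.arg z))

/-- The data of an entropy in the `C^{1,α}` unit ball. -/
structure EntData (α : ℝ) (Φ : ℂ → ℂ) (φ' : ℝ → ℂ) : Prop where
  hd : ∀ θ : ℝ, HasDerivAt (fun t => Φ (circ t)) (φ' θ) θ
  hdot : ∀ θ : ℝ, dotR (φ' θ) (circ θ) = 0
  h0 : ∀ θ, ‖Φ (circ θ)‖ ≤ 1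
  h1 : ∀ θ, ‖φ' θ‖ ≤ 1
  ha : ∀ θ₁ θ₂ : ℝ, ‖φ' θ₁ - φ' θ₂‖ ≤ |θ₁ - θ₂| ^ α

theorem extPhi_of_norm_one (Φ : ℂ → ℂ) {z : ℂ} (hz : ‖z‖ = 1) : extPhi Φ z = Φ z := by
  unfold extPhi; rw [circ_arg_of_norm_one hz, hz]; simp

variable {α : ℝ} {Φ : ℂ → ℂ} {φ' : ℝ → ℂ}

theorem EntData.congr (h : EntData α Φ φ') {a b : ℝ} (hab : circ a = circ b) : φ' a = φ' b := by
  have h1 : HasDerivAt (fun t => Φ (circ (a + t))) (φ' a) 0 := by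
    have := (h.hd (a + 0)).comp_const_add a 0
    simpa using this
  have h2 : HasDerivAt (fun t => Φ (circ (b + t))) (φ' b) 0 := by
    have := (h.hd (b + 0)).comp_const_add b 0
    simpa using this
  have h3 : (fun t => Φ (circ (a + t))) = (fun t => Φ (circ (b + t))) := by
    ext t; rw [circ_add, circ_add, hab]
  rw [h3] at h1
  exact h1.unique h2

theorem EntData.norm_H (h : EntData α Φ φ') (θ : ℝ) :
    ‖3 * Φ (circ θ) + Complex.I * φ' θ‖ ≤ 4 := by
  refine (norm_add_le _ _).trans ?_
  rw [norm_mul, norm_mul, Complex.norm_I]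
  have := h.h0 θ
  have := h.h1 θ
  norm_num
  linarith

theorem EntData.norm_Psi (h : EntData α Φ φ') (z : ℂ) : ‖Psi Φ φ' z‖ ≤ 2 * ‖z‖ := by
  unfold Psi
  rw [norm_smul, Real.norm_of_nonneg (by positivity)]
  have := h.norm_H (Complex.arg z)
  nlinarith [norm_nonneg z]

theorem rpow_le_aux {α t B : ℝ} (hα : α ∈ Ioo (0:ℝ) 1) (ht : 0 ≤ t) (hB : 1 ≤ B) (htB : t ≤ B) :
    t ≤ B * t ^ α := by
  rcases ht.eq_or_lt with rfl | h0
  · positivity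
  have e : t = t ^ (1 - α) * t ^ α := by
    rw [← Real.rpow_add h0]; simp
  have : t ^ (1 - α) ≤ B := by
    calc t ^ (1 - α) ≤ B ^ (1 - α) := Real.rpow_le_rpow ht htB (by linarith [hα.2])
      _ ≤ B ^ (1:ℝ) := Real.rpow_le_rpow_of_exponent_le hB (by linarith [hα.1])
      _ = B := Real.rpow_one B
  calc t = t ^ (1 - α) * t ^ α := e
    _ ≤ B * t ^ α := by gcongr

theorem two_mul_rpow_le {α t : ℝ} (hα : α ∈ Ioo (0:ℝ) 1) (ht : 0 ≤ t) :
    (2 * t) ^ α ≤ 2 * t ^ α := by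
  rw [Real.mul_rpow (by norm_num) ht]
  gcongr
  calc (2:ℝ) ^ α ≤ 2 ^ (1:ℝ) := Real.rpow_le_rpow_of_exponent_le (by norm_num) hα.2.le
    _ = 2 := Real.rpow_one 2

theorem EntData.holder_H (hα : α ∈ Ioo (0:ℝ) 1) (h : EntData α Φ φ') (a b : ℝ) :
    ‖(3 * Φ (circ a) + Complex.I * φ' a) - (3 * Φ (circ b) + Complex.I * φ' b)‖
      ≤ 26 * ‖circ a - circ b‖ ^ α := by
  set t := Complex.arg (circ a / circ b) with ht
  have hb0 : circ b ≠ 0 := by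
    intro h; have := norm_circ b; rw [h] at this; simp at this
  have ha0 : circ a ≠ 0 := by
    intro h; have := norm_circ a; rw [h] at this; simp at this
  have hab : circ a = circ (b + t) := by
    rw [circ_add, ht, circ_arg_of_norm_one (by rw [norm_div, norm_circ, norm_circ, div_one])]
    field_simp
  have htle : |t| ≤ 2 * ‖circ a - circ b‖ := by
    have h1 := Complex.angle_le_mul_norm_sub (norm_circ a) (norm_circ b)
    rw [Complex.angle_eq_abs_arg ha0 hb0] at h1
    refine h1.trans ?_
    have := Real.pi_le_four
    have := norm_nonneg (circ a - circ b)
    nlinarith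
  have htpi : |t| ≤ 4 := (Complex.abs_arg_le_pi _).trans Real.pi_le_four
  have hF : ‖Φ (circ (b + t)) - Φ (circ b)‖ ≤ 1 * ‖(b + t) - b‖ :=
    Convex.norm_image_sub_le_of_norm_hasDerivWithin_le (f := fun t => Φ (circ t)) (s := univ)
      (fun x _ => (h.hd x).hasDerivWithinAt) (fun x _ => h.h1 x) convex_univ (mem_univ _)
      (mem_univ _)
  have hφ := h.ha (b + t) b
  rw [h.congr hab, hab]
  rw [add_sub_cancel_left] at hF hφ
  rw [Real.norm_eq_abs, one_mul] at hF
  have e : (3 * Φ (circ (b + t)) + Complex.I * φ' (b + t)) - (3 * Φ (circ b) + Complex.I * φ' b)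
    = 3 * (Φ (circ (b + t)) - Φ (circ b)) + Complex.I * (φ' (b + t) - φ' b) := by ring
  rw [e, ← hab]
  have k1 : |t| ≤ 4 * |t| ^ α := rpow_le_aux hα (abs_nonneg _) (by norm_num) htpi
  have k2 : |t| ^ α ≤ 2 * ‖circ a - circ b‖ ^ α :=
    (Real.rpow_le_rpow (abs_nonneg _) htle hα.1.le).trans (two_mul_rpow_le hα (norm_nonneg _))
  refine (norm_add_le _ _).trans ?_
  rw [norm_mul, norm_mul, Complex.norm_I, one_mul, ← hab] at *
  have : ‖(3:ℂ)‖ = 3 := by norm_num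
  rw [this]
  rw [← hab] at hF
  linarith

theorem EntData.holder_Psi (hα : α ∈ Ioo (0:ℝ) 1) (h : EntData α Φ φ') {z w : ℂ}
    (hz : ‖z‖ ≤ 1) (hw : ‖w‖ ≤ 1) :
    ‖Psi Φ φ' z - Psi Φ φ' w‖ ≤ 30 * ‖z - w‖ ^ α := by
  set a := Complex.arg z with hadef
  set b := Complex.arg w with hbdef
  set A := 3 * Φ (circ a) + Complex.I * φ' a with hA
  set B := 3 * Φ (circ b) + Complex.I * φ' b with hB
  have hz' := circ_arg_mul z
  have hw' := circ_arg_mul w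
  have e : Psi Φ φ' z - Psi Φ φ' w = ((‖z‖ - ‖w‖) / 2 : ℝ) • A + (‖w‖ / 2 : ℝ) • (A - B) := by
    unfold Psi
    simp only [← hadef, ← hbdef, ← hA, ← hB]
    module
  have hAn : ‖A‖ ≤ 4 := h.norm_H a
  have hAB : ‖A - B‖ ≤ 26 * ‖circ a - circ b‖ ^ α := h.holder_H hα a b
  have hd : |‖z‖ - ‖w‖| ≤ ‖z - w‖ := abs_norm_sub_norm_le z w
  have hzw2 : ‖z - w‖ ≤ 2 := (norm_sub_le _ _).trans (by linarith)
  have k1 : ‖z - w‖ ≤ 2 * ‖z - w‖ ^ α := rpow_le_aux hα (norm_nonneg _) (by norm_num) hzw2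
  have k2 : ‖w‖ * ‖circ a - circ b‖ ≤ 2 * ‖z - w‖ := by
    have : ‖w‖ * ‖circ a - circ b‖ = ‖((‖w‖ - ‖z‖ : ℝ) : ℂ) * circ a + (z - w)‖ := by
      conv_rhs => rw [← hz', ← hw']
      have : ((‖w‖ - ‖z‖ : ℝ) : ℂ) * circ a + (‖z‖ * circ z.arg - ‖w‖ * circ w.arg)
        = (‖w‖ : ℂ) * (circ a - circ b) := by push_cast; rw [← hadef, ← hbdef]; ring
      rw [hz', hw', hz', hw'] at *
      rw [this, norm_mul]; simp
    rw [this]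
    refine (norm_add_le _ _).trans ?_
    rw [norm_mul, norm_circ, mul_one, Complex.norm_real, Real.norm_eq_abs, abs_sub_comm]
    linarith
  have k3 : ‖w‖ * ‖circ a - circ b‖ ^ α ≤ 2 * ‖z - w‖ ^ α := by
    calc ‖w‖ * ‖circ a - circ b‖ ^ α ≤ ‖w‖ ^ α * ‖circ a - circ b‖ ^ α := by
          gcongr
          simpa using rpow_le_aux hα (norm_nonneg w) le_rfl hw
      _ = (‖w‖ * ‖circ a - circ b‖) ^ α := (Real.mul_rpow (norm_nonneg _) (norm_nonneg _)).symm
      _ ≤ (2 * ‖z - w‖) ^ α := Real.rpow_le_rpow (by positivity) k2 hα.1.le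
      _ ≤ _ := two_mul_rpow_le hα (norm_nonneg _)
  rw [e]
  refine (norm_add_le _ _).trans ?_
  rw [norm_smul, norm_smul, Real.norm_eq_abs, Real.norm_eq_abs, abs_div, abs_div,
    abs_of_nonneg (norm_nonneg w), abs_two]
  have j1 : |‖z‖ - ‖w‖| * ‖A‖ ≤ ‖z - w‖ * 4 := by gcongr
  have j2 : ‖w‖ * ‖A - B‖ ≤ ‖w‖ * (26 * ‖circ a - circ b‖ ^ α) := by gcongr
  nlinarith
end

/-- The derivative of the extended entropy. -/
def dExt (γ : ℝ) (z P : ℂ) : ℂ →L[ℝ] ℂ :=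
  γ • ContinuousLinearMap.id ℝ ℂ + ((2:ℝ) • (innerSL ℝ z)).smulRight P

theorem dExt_apply (γ : ℝ) (z P w : ℂ) :
    dExt γ z P w = γ • w + (2 * (z.re * w.re + z.im * w.im)) • P := by
  simp [dExt, Complex.inner, innerSL_apply_apply]
  left; ring

theorem EntData.hasFDerivAt_ext {α : ℝ} {Φ : ℂ → ℂ} {φ' : ℝ → ℂ} (h : EntData α Φ φ') (z : ℂ) :
    ∃ γ : ℝ, |γ| ≤ ‖z‖ ^ 2 ∧ HasFDerivAt (extPhi Φ) (dExt γ z (Psi Φ φ' z)) z := by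
  by_cases hz : z = 0
  · subst hz
    refine ⟨0, by simp, ?_⟩
    have e : dExt 0 0 (Psi Φ φ' 0) = 0 := by ext w <;> simp [dExt]
    rw [e]
    have hO : (extPhi Φ) =O[𝓝 0] fun x => ‖x - 0‖ ^ 3 := by
      refine Asymptotics.IsBigO.of_bound 1 (Eventually.of_forall fun x => ?_)
      unfold extPhi
      rw [norm_smul, sub_zero]
      have := h.h0 (Complex.arg x)
      have h3 : 0 ≤ ‖x‖ ^ 3 := by positivity
      rw [Real.norm_of_nonneg h3, one_mul]
      nlinarith
    exact hO.hasFDerivAt (by norm_num)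
  set θ := Complex.arg z with hθ
  set r := ‖z‖ with hr
  have hr0 : 0 < r := norm_pos_iff.2 hz
  set u := circ θ with hu
  have hzu : (r : ℂ) * u = z := circ_arg_mul z
  have hunorm : u.re * u.re + u.im * u.im = 1 := by
    have := norm_circ θ
    rw [← hu] at this
    have h2 := Complex.sq_norm u
    rw [this, Complex.normSq_apply] at h2; linarith
  -- near `z`
  have hloc : extPhi Φ =ᶠ[𝓝 z] fun y => (‖y‖ ^ 3 : ℝ) • Φ (circ (θ + (Complex.log (y / z)).im)) := by
    filter_upwards [isOpen_ne.mem_nhds hz] with y hy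
    have hy0 : (‖y‖ : ℂ) ≠ 0 := by simpa using hy
    unfold extPhi
    congr 2
    rw [circ_add, Complex.log_im]
    have h1 := circ_arg_mul y
    have h2 := circ_arg_mul (y / z)
    have hr' : (r : ℂ) ≠ 0 := by exact_mod_cast hr0.ne'
    rw [norm_div, Complex.ofReal_div] at h2
    apply mul_left_cancel₀ hy0
    rw [h1, ← hu]
    have h3 : (‖y‖ : ℂ) * circ (Complex.arg (y / z)) = (y / z) * r := by
      have e : (‖y‖ : ℂ) * circ (Complex.arg (y / z))
          = ((‖y‖ : ℂ) / (‖z‖ : ℂ) * circ (Complex.arg (y / z))) * r := by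
        rw [← hr]; field_simp
      rw [e, h2]
    calc y = (y / z) * ((r : ℂ) * u) := by rw [hzu]; field_simp
      _ = _ := by linear_combination (-u) * h3
  have hlog : HasDerivAt (fun y : ℂ => Complex.log (y / z)) (z⁻¹) z := by
    have h1 : HasDerivAt (fun y : ℂ => y / z) (z⁻¹) z := by
      simpa [div_eq_mul_inv] using (hasDerivAt_id z).mul_const z⁻¹
    have h2 : HasDerivAt Complex.log ((z / z)⁻¹) (z / z) := by
      apply Complex.hasDerivAt_log
      rw [div_self hz]; exact Complex.one_mem_slitPlane
    have := HasDerivAt.comp z (h₂ := Complex.log) (h := fun y => y / z) h2 h1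
    simpa [Function.comp_def, div_self hz] using this
  have harg : HasFDerivAt (fun y : ℂ => θ + (Complex.log (y / z)).im)
      (Complex.imCLM.comp ((ContinuousLinearMap.toSpanSingleton ℂ z⁻¹).restrictScalars ℝ)) z := by
    have h1 := (hlog.hasFDerivAt.restrictScalars ℝ)
    have h2 := (Complex.imCLM.hasFDerivAt.comp z h1)
    exact h2.const_add θ
  have hF : HasDerivAt (fun t => Φ (circ t)) (φ' θ) (θ + (Complex.log (z / z)).im) := by
    have := h.hd θ
    rwa [div_self hz, Complex.log_one, Complex.zero_im, add_zero]
  have hFc := hF.hasFDerivAt.comp z harg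
  have hn : HasFDerivAt (fun y : ℂ => ‖y‖ ^ 3) ((3 * r) • (innerSL ℝ z)) z := by
    have h1 : HasFDerivAt (fun y : ℂ => ‖y‖ ^ 2) (2 • (innerSL ℝ z)) z :=
      (hasStrictFDerivAt_norm_sq z).hasFDerivAt
    have h2 : HasFDerivAt (fun y : ℂ => (‖y‖ ^ 2) ^ (3/2 : ℝ))
        (((3/2 : ℝ) * (‖z‖ ^ 2) ^ ((3/2 : ℝ) - 1)) • (2 • (innerSL ℝ z))) z :=
      h1.rpow_const (Or.inr (by norm_num))
    have e1 : (fun y : ℂ => ‖y‖ ^ 3) = fun y : ℂ => (‖y‖ ^ 2) ^ (3/2 : ℝ) := by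
      ext y
      rw [← Real.rpow_natCast ‖y‖ 2, ← Real.rpow_mul (norm_nonneg _), ← Real.rpow_natCast]
      norm_num
    rw [e1]
    convert h2 using 1
    have e2 : (‖z‖ ^ 2) ^ ((3/2 : ℝ) - 1) = r := by
      rw [← Real.rpow_natCast ‖z‖ 2, ← Real.rpow_mul (norm_nonneg _)]
      norm_num [hr]
    rw [e2, ← Nat.cast_smul_eq_nsmul ℝ, smul_smul]
    congr 1; push_cast; ring
  have hmain := (hn.smul hFc).congr_of_eventuallyEq hloc
  set a : ℝ := (φ' θ).im * u.re - (φ' θ).re * u.im with ha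
  have hperp : (φ' θ).re * u.re + (φ' θ).im * u.im = 0 := h.hdot θ
  -- `φ' = a i u`
  have hre : (φ' θ).re = - a * u.im := by
    rw [ha]; linear_combination (-(φ' θ).re) * hunorm + u.re * hperp
  have him : (φ' θ).im = a * u.re := by
    rw [ha]; linear_combination (-(φ' θ).im) * hunorm + u.im * hperp
  have haabs : |a| ≤ 1 := by
    have h1 := h.h1 θ
    have h2 : ‖φ' θ‖ ^ 2 = a ^ 2 := by
      rw [Complex.sq_norm, Complex.normSq_apply, hre, him]
      linear_combination a ^ 2 * hunorm
    rw [← sq_le_one_iff_abs_le_one, ← h2]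
    nlinarith [norm_nonneg (φ' θ)]
  refine ⟨r ^ 2 * a, ?_, ?_⟩
  · rw [abs_mul, abs_of_nonneg (by positivity)]
    nlinarith [sq_nonneg r]
  refine hmain.congr_fderiv ?_
  refine ContinuousLinearMap.ext fun w => Eq.symm ?_
  have hzre : z.re = r * u.re := by rw [← hzu]; simp
  have hzim : z.im = r * u.im := by rw [← hzu]; simp
  have hwz : (w * z⁻¹).im = (w.im * u.re - w.re * u.im) / r := by
    have hinv : z⁻¹ = ((r⁻¹ : ℝ) : ℂ) * (starRingEnd ℂ u) := by
      rw [Complex.inv_def, Complex.normSq_eq_norm_sq, ← hr, ← hzu]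
      simp only [map_mul, Complex.conj_ofReal]
      push_cast
      have hr' : (r : ℂ) ≠ 0 := by exact_mod_cast hr0.ne'
      field_simp
    rw [hinv]
    simp
    field_simp
    ring
  rw [dExt_apply]
  have hlog0 : (Complex.log (z / z)).im = 0 := by rw [div_self hz]; simp
  simp only [_root_.add_apply, _root_.smul_apply,
    ContinuousLinearMap.comp_apply, ContinuousLinearMap.smulRight_apply, Function.comp,
    ContinuousLinearMap.coe_restrictScalars', ContinuousLinearMap.toSpanSingleton_apply,
    Complex.imCLM_apply, innerSL_apply_apply, hlog0, add_zero]
  rw [smul_eq_mul w, hwz, Psi, ← hθ, ← hr, ← hu]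
  have hin : inner ℝ z w = r * (u.re * w.re + u.im * w.im) := by
    rw [Complex.inner]; simp [hzre, hzim]; ring
  rw [hin, hzre, hzim]
  clear_value a
  apply Complex.ext
  · simp only [Complex.add_re, Complex.smul_re, Complex.mul_re, Complex.I_re, Complex.I_im, hre, him,
      Complex.re_ofNat, Complex.im_ofNat, smul_eq_mul]
    field_simp
    linear_combination (-a * w.re) * hunorm
  · simp only [Complex.add_im, Complex.smul_im, Complex.mul_im, Complex.I_re, Complex.I_im, hre, him,
      Complex.re_ofNat, Complex.im_ofNat, smul_eq_mul]
    field_simp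
    linear_combination (-a * w.im) * hunorm

/-- Mollification kernels at scale `ε`. -/
structure Ker (B ε : ℝ) (k : ℂ → ℝ) : Prop where
  smooth : ContDiff ℝ (⊤ : ℕ∞) k
  cs : HasCompactSupport k
  supp : tsupport k ⊆ ball 0 ε
  nonneg : ∀ x, 0 ≤ k x
  int : ∫ x, k x = 1
  bd : ∀ x, k x ≤ B / ε ^ 2
  dbd : ∀ x, ‖fderiv ℝ k x‖ ≤ B / ε ^ 3

theorem exists_ker : ∃ B : ℝ, 1 ≤ B ∧ ∀ ε : ℝ, 0 < ε → ∃ k, Ker B ε k := by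
  let b : ContDiffBump (0:ℂ) := ⟨1/4, 1/2, by norm_num, by norm_num⟩
  set k₁ : ℂ → ℝ := b.normed volume with hk₁
  have hsm : ContDiff ℝ (⊤ : ℕ∞) k₁ := b.contDiff_normed
  have hcs : HasCompactSupport k₁ := b.hasCompactSupport_normed
  have hts : tsupport k₁ = closedBall 0 (1/2) := b.tsupport_normed_eq
  obtain ⟨B1, hB1⟩ := hcs.exists_bound_of_continuous hsm.continuous
  obtain ⟨B2, hB2⟩ := (hcs.fderiv ℝ).exists_bound_of_continuous
    (hsm.continuous_fderiv (by simp))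
  set B := max 1 (max B1 B2) with hB
  refine ⟨B, le_max_left _ _, fun ε hε => ⟨fun y => (ε ^ 2)⁻¹ * k₁ (ε⁻¹ • y), ?_⟩⟩
  have hlin : ContDiff ℝ (⊤ : ℕ∞) (fun y : ℂ => ε⁻¹ • y) := contDiff_const_smul _
  have hd : ∀ x, HasFDerivAt (fun y => (ε ^ 2)⁻¹ * k₁ (ε⁻¹ • y))
      ((ε ^ 2)⁻¹ • ((fderiv ℝ k₁ (ε⁻¹ • x)).comp (ε⁻¹ • ContinuousLinearMap.id ℝ ℂ))) x := by
    intro x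
    have h1 : HasFDerivAt (fun y : ℂ => ε⁻¹ • y) (ε⁻¹ • ContinuousLinearMap.id ℝ ℂ) x :=
      (hasFDerivAt_id x).const_smul ε⁻¹
    have h2 : HasFDerivAt k₁ (fderiv ℝ k₁ (ε⁻¹ • x)) (ε⁻¹ • x) :=
      (hsm.differentiable (by simp) _).hasFDerivAt
    exact (HasFDerivAt.comp x h2 h1).const_mul _
  have hsup : tsupport (fun y => (ε ^ 2)⁻¹ * k₁ (ε⁻¹ • y)) ⊆ closedBall 0 (ε / 2) := by
    refine closure_minimal (fun x hx => ?_) isClosed_closedBall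
    have : k₁ (ε⁻¹ • x) ≠ 0 := fun h => hx (by
      show (ε ^ 2)⁻¹ * k₁ (ε⁻¹ • x) = 0
      rw [h, mul_zero])
    have := (subset_tsupport _).trans hts.subset (Function.mem_support.2 this)
    rw [mem_closedBall_zero_iff, norm_smul, Real.norm_of_nonneg (by positivity)] at this
    rw [mem_closedBall_zero_iff]
    rw [inv_mul_le_iff₀ hε] at this
    linarith
  refine ⟨contDiff_const.mul (hsm.comp hlin), ?_, ?_, ?_, ?_, ?_, ?_⟩
  · exact HasCompactSupport.of_support_subset_isCompact (isCompact_closedBall 0 (ε/2))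
      ((subset_tsupport _).trans hsup)
  · exact hsup.trans (closedBall_subset_ball (by linarith))
  · intro x; have := b.nonneg_normed (μ := volume) (ε⁻¹ • x); positivity
  · rw [integral_const_mul, Measure.integral_comp_inv_smul]
    have : ∫ x, k₁ x = 1 := b.integral_normed
    rw [this]; simp; field_simp
  · intro x
    have h1 : k₁ (ε⁻¹ • x) ≤ B :=
      (le_abs_self _).trans ((hB1 _).trans ((le_max_left _ _).trans (le_max_right _ _)))
    rw [div_eq_inv_mul]; gcongr
  · intro x
    rw [(hd x).fderiv, norm_smul]
    have h1 : ‖fderiv ℝ k₁ (ε⁻¹ • x)‖ ≤ B :=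
      ((hB2 _).trans ((le_max_right _ _).trans (le_max_right _ _)))
    have h2 : ‖ε⁻¹ • ContinuousLinearMap.id ℝ ℂ‖ ≤ ε⁻¹ := by
      refine ContinuousLinearMap.opNorm_le_bound _ (by positivity) (fun v => le_of_eq ?_)
      show ‖ε⁻¹ • v‖ = _
      rw [norm_smul, Real.norm_of_nonneg (by positivity)]
    have h4 := ContinuousLinearMap.opNorm_comp_le (fderiv ℝ k₁ (ε⁻¹ • x))
      (ε⁻¹ • ContinuousLinearMap.id ℝ ℂ)
    rw [Real.norm_of_nonneg (by positivity)]
    calc (ε ^ 2)⁻¹ * _ ≤ (ε ^ 2)⁻¹ * (B * ε⁻¹) := by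
          gcongr
          refine h4.trans ?_
          gcongr
      _ = B / ε ^ 3 := by field_simp

/-- Convolution with a kernel. -/
def cv (k : ℂ → ℝ) (f : ℂ → ℂ) (x : ℂ) : ℂ := ∫ y, k (x - y) • f y

theorem Ker.locInt {f : ℂ → ℂ} {b : ℝ} (hf : Measurable f) (hb : ∀ x, ‖f x‖ ≤ b) :
    LocallyIntegrable f (volume : Measure ℂ) := by
  refine (locallyIntegrable_const b).mono hf.aestronglyMeasurable (Eventually.of_forall fun x => ?_)
  exact (hb x).trans (le_abs_self _)

theorem cv_eq (k : ℂ → ℝ) (f : ℂ → ℂ) :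
    cv k f = MeasureTheory.convolution k f (ContinuousLinearMap.lsmul ℝ ℝ) volume := by
  ext x
  rw [convolution_eq_swap]; rfl

theorem Ker.contDiff {B ε : ℝ} {k : ℂ → ℝ} (hk : Ker B ε k) {f : ℂ → ℂ} {b : ℝ}
    (hf : Measurable f) (hb : ∀ x, ‖f x‖ ≤ b) : ContDiff ℝ (⊤ : ℕ∞) (cv k f) := by
  rw [cv_eq]
  exact hk.cs.contDiff_convolution_left _ hk.smooth (Ker.locInt hf hb)

theorem Ker.integrable_fderiv {B ε : ℝ} {k : ℂ → ℝ} (hk : Ker B ε k) {f : ℂ → ℂ} {b : ℝ}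
    (hf : Measurable f) (hb : ∀ x, ‖f x‖ ≤ b) (x w : ℂ) :
    Integrable (fun y => (fderiv ℝ k (x - y) w) • f y) := by
  have h1 : Continuous (fun y => fderiv ℝ k (x - y) w) := by
    have := hk.smooth.continuous_fderiv (by simp)
    fun_prop
  have h2 : HasCompactSupport (fun y => fderiv ℝ k (x - y) w) := by
    have h3 : HasCompactSupport (fun y => fderiv ℝ k (x - y)) :=
      (hk.cs.fderiv ℝ).comp_homeomorph (Homeomorph.subLeft x)
    exact h3.comp_left (g := fun L : ℂ →L[ℝ] ℝ => L w) rfl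
  exact (h1.integrable_of_hasCompactSupport h2).smul_bdd b hf.aestronglyMeasurable
    (Eventually.of_forall hb)

theorem Ker.integrable {B ε : ℝ} {k : ℂ → ℝ} (hk : Ker B ε k) {f : ℂ → ℂ} {b : ℝ}
    (hf : Measurable f) (hb : ∀ x, ‖f x‖ ≤ b) (x : ℂ) :
    Integrable (fun y => k (x - y) • f y) := by
  have h1 : Continuous (fun y => k (x - y)) := by
    have := hk.smooth.continuous
    fun_prop
  have h2 : HasCompactSupport (fun y => k (x - y)) :=
    hk.cs.comp_homeomorph (Homeomorph.subLeft x)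
  exact (h1.integrable_of_hasCompactSupport h2).smul_bdd b hf.aestronglyMeasurable
    (Eventually.of_forall hb)

theorem Ker.fderiv_cv {B ε : ℝ} {k : ℂ → ℝ} (hk : Ker B ε k) {f : ℂ → ℂ} {b : ℝ}
    (hf : Measurable f) (hb : ∀ x, ‖f x‖ ≤ b) (x w : ℂ) :
    fderiv ℝ (cv k f) x w = ∫ y, (fderiv ℝ k (x - y) w) • f y := by
  have h := hk.cs.hasFDerivAt_convolution_left (ContinuousLinearMap.lsmul ℝ ℝ)
    (hk.smooth.of_le (by simp)) (Ker.locInt hf hb) x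
  rw [cv_eq, h.fderiv, convolution_eq_swap, ContinuousLinearMap.integral_apply]
  · rfl
  · have := (hk.cs.fderiv ℝ).convolutionExists_left
      ((ContinuousLinearMap.lsmul ℝ ℝ).precompL ℂ) (hk.smooth.continuous_fderiv (by simp))
      (Ker.locInt hf hb) x
    exact this.integrable_swap

theorem Ker.int_shift {B ε : ℝ} {k : ℂ → ℝ} (hk : Ker B ε k) (x : ℂ) : ∫ y, k (x - y) = 1 := by
  rw [integral_sub_left_eq_self k volume x, hk.int]

theorem Ker.cv_const {B ε : ℝ} {k : ℂ → ℝ} (hk : Ker B ε k) (c : ℂ) : cv k (fun _ => c) = fun _ => c := by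
  ext x
  rw [cv, integral_smul_const, hk.int_shift, one_smul]

theorem Ker.cv_sub {B ε : ℝ} {k : ℂ → ℝ} (hk : Ker B ε k) {f : ℂ → ℂ} {b : ℝ}
    (hf : Measurable f) (hb : ∀ x, ‖f x‖ ≤ b) (x c : ℂ) :
    cv k f x - c = ∫ y, k (x - y) • (f y - c) := by
  have h : c = ∫ y, k (x - y) • c := by
    rw [integral_smul_const, hk.int_shift, one_smul]
  conv_lhs => rw [h]
  rw [cv, ← integral_sub (hk.integrable hf hb x)
    (hk.integrable (f := fun _ => c) measurable_const (fun _ => le_rfl) x)]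
  simp [smul_sub]

theorem Ker.fderiv_cv_sub {B ε : ℝ} {k : ℂ → ℝ} (hk : Ker B ε k) {f : ℂ → ℂ} {b : ℝ}
    (hf : Measurable f) (hb : ∀ x, ‖f x‖ ≤ b) (x w c : ℂ) :
    fderiv ℝ (cv k f) x w = ∫ y, (fderiv ℝ k (x - y) w) • (f y - c) := by
  have h : fderiv ℝ (cv k (fun _ => c)) x w = 0 := by
    rw [hk.cv_const]; simp
  rw [hk.fderiv_cv (f := fun _ => c) measurable_const (fun _ => le_rfl)] at h
  rw [hk.fderiv_cv hf hb, ← sub_zero (∫ y, (fderiv ℝ k (x - y) w) • f y), ← h,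
    ← integral_sub (hk.integrable_fderiv hf hb x w)
    (hk.integrable_fderiv (f := fun _ => c) measurable_const (fun _ => le_rfl) x w)]
  simp [smul_sub]

theorem ker_bound {κ : ℂ → ℝ} {F : ℂ → ℂ} {G : ℂ → ℝ} {x : ℂ} {ε c : ℝ}
    (hκ : ∀ y, y ∉ ball x ε → κ y = 0) (hc : ∀ y, |κ y| ≤ c)
    (hG : IntegrableOn G (ball x ε)) (hFG : ∀ y ∈ ball x ε, ‖F y‖ ≤ G y) :
    ‖∫ y, κ y • F y‖ ≤ c * ∫ y in ball x ε, G y := by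
  have h1 : ∫ y, κ y • F y = ∫ y in ball x ε, κ y • F y := by
    rw [setIntegral_eq_integral_of_forall_compl_eq_zero]
    intro y hy; rw [hκ y hy, zero_smul]
  rw [h1, ← integral_const_mul]
  refine norm_integral_le_of_norm_le (hG.const_mul c) ?_
  refine (ae_restrict_iff' measurableSet_ball).2 (Eventually.of_forall fun y hy => ?_)
  rw [norm_smul]
  have h0 : 0 ≤ c := (abs_nonneg _).trans (hc y)
  exact mul_le_mul (hc y) (hFG y hy) (norm_nonneg _) h0

theorem ker_boundR {κ : ℂ → ℝ} {F : ℂ → ℝ} {G : ℂ → ℝ} {x : ℂ} {ε c : ℝ}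
    (hκ : ∀ y, y ∉ ball x ε → κ y = 0) (hc : ∀ y, |κ y| ≤ c)
    (hG : IntegrableOn G (ball x ε)) (hFG : ∀ y ∈ ball x ε, |F y| ≤ G y) :
    |∫ y, κ y * F y| ≤ c * ∫ y in ball x ε, G y := by
  have h1 : ∫ y, κ y * F y = ∫ y in ball x ε, κ y * F y := by
    rw [setIntegral_eq_integral_of_forall_compl_eq_zero]
    intro y hy; rw [hκ y hy, zero_mul]
  rw [h1, ← integral_const_mul, ← Real.norm_eq_abs]
  refine norm_integral_le_of_norm_le (hG.const_mul c) ?_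
  refine (ae_restrict_iff' measurableSet_ball).2 (Eventually.of_forall fun y hy => ?_)
  rw [norm_mul]
  have h0 : 0 ≤ c := (abs_nonneg _).trans (hc y)
  exact mul_le_mul (hc y) (hFG y hy) (norm_nonneg _) h0

theorem Ker.zero_out {B ε : ℝ} {k : ℂ → ℝ} (hk : Ker B ε k) {x y : ℂ} (hy : y ∉ ball x ε) :
    k (x - y) = 0 := by
  by_contra h
  have := hk.supp (subset_tsupport _ (Function.mem_support.2 h))
  rw [mem_ball_zero_iff] at this
  apply hy; rw [mem_ball, dist_comm, dist_eq_norm]; exact this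

theorem Ker.fderiv_zero_out {B ε : ℝ} {k : ℂ → ℝ} (hk : Ker B ε k) {x y : ℂ} (hy : y ∉ ball x ε) :
    fderiv ℝ k (x - y) = 0 := by
  by_contra h
  have := hk.supp (support_fderiv_subset ℝ (Function.mem_support.2 h))
  rw [mem_ball_zero_iff] at this
  apply hy; rw [mem_ball, dist_comm, dist_eq_norm]; exact this

theorem Ker.abs_le {B ε : ℝ} {k : ℂ → ℝ} (hk : Ker B ε k) (x : ℂ) : |k x| ≤ B / ε ^ 2 := by
  rw [abs_of_nonneg (hk.nonneg x)]; exact hk.bd x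

theorem Ker.abs_fderiv_le {B ε : ℝ} {k : ℂ → ℝ} (hk : Ker B ε k) (x w : ℂ) :
    |fderiv ℝ k x w| ≤ B / ε ^ 3 * ‖w‖ :=
  ((fderiv ℝ k x).le_opNorm w).trans (mul_le_mul_of_nonneg_right (hk.dbd x) (norm_nonneg _))

theorem dpow_intOn {m : ℂ → ℂ} (hm : Measurable m) (hm1 : ∀ x, ‖m x‖ ≤ 1) (x c : ℂ) (ε : ℝ)
    {p : ℝ} (hp : 0 < p) : IntegrableOn (fun y => ‖m y - c‖ ^ p) (ball x ε) := by
  refine Measure.integrableOn_of_bounded (M := (1 + ‖c‖) ^ p) (measure_ball_lt_top).ne ?_ ?_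
  · have : Measurable (fun y => ‖m y - c‖ ^ p) := ((hm.sub_const c).norm).pow_const p
    exact this.aestronglyMeasurable
  · refine Eventually.of_forall fun y => ?_
    rw [Real.norm_of_nonneg (by positivity)]
    gcongr
    exact (norm_sub_le _ _).trans (by linarith [hm1 y])

theorem vol_ball_le (x : ℂ) {ε : ℝ} (hε : 0 < ε) : (volume : Measure ℂ).real (ball x ε) ≤ 4 * ε ^ 2 := by
  rw [Measure.real, Complex.volume_ball]
  simp only [ENNReal.toReal_mul, ENNReal.toReal_pow, ENNReal.toReal_ofReal hε.le,
    ENNReal.coe_toReal, NNReal.coe_real_pi]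
  nlinarith [Real.pi_lt_four, sq_nonneg ε]

theorem dpow_le {m : ℂ → ℂ} (hm : Measurable m) (hm1 : ∀ x, ‖m x‖ ≤ 1) {x c : ℂ} {ε S : ℝ}
    (hε : 0 < ε) (hS : 0 < S) {p q : ℝ} (hp : 0 < p) (hpq : p ≤ q)
    (h : ∫ y in ball x ε, ‖m y - c‖ ^ q ≤ ε ^ 2 * S ^ q) :
    ∫ y in ball x ε, ‖m y - c‖ ^ p ≤ 5 * ε ^ 2 * S ^ p := by
  have key : ∀ d : ℝ, 0 ≤ d → d ^ p ≤ S ^ p + S ^ (p - q) * d ^ q := by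
    intro d hd
    rcases le_total d S with h1 | h1
    · have := Real.rpow_le_rpow hd h1 hp.le
      have : 0 ≤ S ^ (p - q) * d ^ q := by positivity
      linarith
    · have hd' : 0 < d := hS.trans_le h1
      have h2 : d ^ (p - q) ≤ S ^ (p - q) :=
        Real.rpow_le_rpow_of_nonpos hS h1 (by linarith)
      have h3 : d ^ p = d ^ (p - q) * d ^ q := by
        rw [← Real.rpow_add hd']; congr 1; ring
      rw [h3]
      have : d ^ (p - q) * d ^ q ≤ S ^ (p - q) * d ^ q := by gcongr
      have : 0 ≤ S ^ p := by positivity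
      linarith
  have hq := dpow_intOn hm hm1 x c ε (hp.trans_le hpq)
  have hc : IntegrableOn (fun _ : ℂ => S ^ p) (ball x ε) :=
    integrableOn_const (measure_ball_lt_top).ne
  calc ∫ y in ball x ε, ‖m y - c‖ ^ p
      ≤ ∫ y in ball x ε, (S ^ p + S ^ (p - q) * ‖m y - c‖ ^ q) :=
        integral_mono (dpow_intOn hm hm1 x c ε hp) (hc.add (hq.const_mul _))
          (fun y => key _ (norm_nonneg _))
    _ = (volume : Measure ℂ).real (ball x ε) * S ^ p + S ^ (p - q) * ∫ y in ball x ε, ‖m y - c‖ ^ q := by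
        rw [integral_add hc (hq.const_mul _), integral_const_mul]
        simp
    _ ≤ 4 * ε ^ 2 * S ^ p + S ^ (p - q) * (ε ^ 2 * S ^ q) := by
        gcongr
        exact vol_ball_le x hε
    _ = 5 * ε ^ 2 * S ^ p := by
        have : S ^ p = S ^ (p - q) * S ^ q := by
          rw [← Real.rpow_add hS]; congr 1; ring
        rw [this]; ring

/-- Defect `1 - |M|²` of the mollification. -/
def uf (k : ℂ → ℝ) (m : ℂ → ℂ) (x : ℂ) : ℝ :=
  1 - ((cv k m x).re * (cv k m x).re + (cv k m x).im * (cv k m x).im)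

theorem Ker.hasFDerivAt_uf {B ε : ℝ} {k : ℂ → ℝ} (hk : Ker B ε k) {f : ℂ → ℂ} {b : ℝ}
    (hf : Measurable f) (hb : ∀ x, ‖f x‖ ≤ b) (x : ℂ) : ContDiff ℝ (⊤ : ℕ∞) (uf k f) ∧ ∀ w,
    fderiv ℝ (uf k f) x w = -2 * ((cv k f x).re * (fderiv ℝ (cv k f) x w).re
      + (cv k f x).im * (fderiv ℝ (cv k f) x w).im) := by
  have hc := hk.contDiff hf hb
  have hre : ContDiff ℝ (⊤ : ℕ∞) (fun x => (cv k f x).re) := Complex.reCLM.contDiff.comp hc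
  have him : ContDiff ℝ (⊤ : ℕ∞) (fun x => (cv k f x).im) := Complex.imCLM.contDiff.comp hc
  refine ⟨contDiff_const.sub ((hre.mul hre).add (him.mul him)), fun w => ?_⟩
  have h := (hc.differentiable (by simp) x).hasFDerivAt
  have h1 : HasFDerivAt (fun x => (cv k f x).re) (Complex.reCLM.comp (fderiv ℝ (cv k f) x)) x :=
    Complex.reCLM.hasFDerivAt.comp x h
  have h2 : HasFDerivAt (fun x => (cv k f x).im) (Complex.imCLM.comp (fderiv ℝ (cv k f) x)) x :=
    Complex.imCLM.hasFDerivAt.comp x h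
  have h3 : HasFDerivAt (uf k f) _ x := ((h1.mul h1).add (h2.mul h2)).const_sub 1
  rw [h3.fderiv]
  simp
  ring

theorem Ker.norm_cv_le {B ε : ℝ} {k : ℂ → ℝ} (hk : Ker B ε k) {f : ℂ → ℂ} {b : ℝ}
    (hb : ∀ x, ‖f x‖ ≤ b) (x : ℂ) : ‖cv k f x‖ ≤ b := by
  have hi : Integrable (fun y => k (x - y)) :=
    ((hk.smooth.continuous.integrable_of_hasCompactSupport hk.cs).comp_sub_left x)
  have := norm_integral_le_of_norm_le (f := fun y => k (x - y) • f y) (hi.mul_const b)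
    (Eventually.of_forall fun y => by
      rw [norm_smul, Real.norm_of_nonneg (hk.nonneg _)]
      exact mul_le_mul_of_nonneg_left (hb y) (hk.nonneg _))
  rw [integral_mul_const, hk.int_shift, one_mul] at this
  exact this

theorem EntData.measurable_Psi {α : ℝ} {Φ : ℂ → ℂ} {φ' : ℝ → ℂ} (hα : α ∈ Ioo (0:ℝ) 1)
    (h : EntData α Φ φ') : Measurable (Psi Φ φ') := by
  have h1 : Continuous (fun t => Φ (circ t)) :=
    continuous_iff_continuousAt.2 fun t => (h.hd t).continuousAt
  have h2 : Continuous φ' := by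
    refine continuous_iff_continuousAt.2 fun t => ?_
    rw [ContinuousAt, tendsto_iff_norm_sub_tendsto_zero]
    have h3 : Tendsto (fun s => |s - t| ^ α) (𝓝 t) (𝓝 0) := by
      have : Continuous (fun s => |s - t| ^ α) :=
        (continuous_id.sub continuous_const).abs.rpow_const (fun _ => Or.inr hα.1.le)
      have h := this.tendsto t
      simpa [Real.zero_rpow hα.1.ne'] using h
    exact squeeze_zero (fun _ => norm_nonneg _) (fun s => h.ha s t) h3
  have h4 : Measurable (fun z : ℂ => Φ (circ (Complex.arg z))) := h1.measurable.comp Complex.measurable_arg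
  have h5 : Measurable (fun z : ℂ => φ' (Complex.arg z)) := h2.measurable.comp Complex.measurable_arg
  exact (measurable_norm.div_const 2).smul ((h4.const_mul 3).add (h5.const_mul _))

theorem dot_half {c z : ℂ} (hc : ‖c‖ = 1) (hz : ‖z‖ = 1) :
    c.re * (z - c).re + c.im * (z - c).im = -(1/2) * ‖z - c‖ ^ (2:ℝ) := by
  have h1 : c.re * c.re + c.im * c.im = 1 := by
    rw [← Complex.normSq_apply, ← Complex.sq_norm, hc]; norm_num
  have h2 : z.re * z.re + z.im * z.im = 1 := by
    rw [← Complex.normSq_apply, ← Complex.sq_norm, hz]; norm_num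
  rw [Real.rpow_two, Complex.sq_norm, Complex.normSq_apply, Complex.sub_re, Complex.sub_im]
  linear_combination (1/2) * h2 - (1/2) * h1

theorem dot_le (z w : ℂ) : |z.re * w.re + z.im * w.im| ≤ ‖z‖ * ‖w‖ := by
  have := abs_real_inner_le_norm z w
  rw [Complex.inner] at this
  convert this using 2
  simp
  ring

/-- The linear functional `w ↦ c·w`. -/
def dotL (c : ℂ) : ℂ →L[ℝ] ℝ := c.re • Complex.reCLM + c.im • Complex.imCLM

theorem dotL_apply (c w : ℂ) : dotL c w = c.re * w.re + c.im * w.im := by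
  simp [dotL]

theorem dot_integral {κ : ℂ → ℝ} {m : ℂ → ℂ} {x c : ℂ} {ε : ℝ} (hc : ‖c‖ = 1)
    (hκ : ∀ y, y ∉ ball x ε → κ y = 0) (hball : ∀ y ∈ ball x ε, ‖m y‖ = 1)
    (hi : Integrable (fun y => κ y • (m y - c))) :
    dotL c (∫ y, κ y • (m y - c)) = -(1/2) * ∫ y, κ y * ‖m y - c‖ ^ (2:ℝ) := by
  rw [← (dotL c).integral_comp_comm hi, ← integral_const_mul]
  congr 1; ext y
  rw [map_smul, smul_eq_mul]
  by_cases hy : y ∈ ball x ε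
  · rw [dotL_apply, dot_half hc (hball y hy)]; ring
  · rw [hκ y hy]; simp

set_option maxHeartbeats 2000000 in
theorem point_est_S {α : ℝ} {Φ : ℂ → ℂ} {φ' : ℝ → ℂ} (hα : α ∈ Ioo (0:ℝ) 1)
    (h : EntData α Φ φ') {B ε S : ℝ} (hB : 1 ≤ B) (hε : 0 < ε) (hS : 0 < S)
    {k : ℂ → ℝ} (hk : Ker B ε k) {m : ℂ → ℂ} (hm : Measurable m) (hm1 : ∀ x, ‖m x‖ ≤ 1)
    {x : ℂ} (hx : ‖m x‖ = 1) (hball : ∀ y ∈ ball x ε, ‖m y‖ = 1)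
    (hSq : ∫ y in ball x ε, ‖m y - m x‖ ^ (2+α) ≤ ε ^ 2 * S ^ (2+α)) :
    |fderiv ℝ (uf k m) x (Psi Φ φ' (cv k m x) - cv k (fun y => Psi Φ φ' (m y)) x)|
      + |uf k m x * ((fderiv ℝ (cv k (fun y => Psi Φ φ' (m y))) x 1).re
        + (fderiv ℝ (cv k (fun y => Psi Φ φ' (m y))) x Complex.I).im)|
      ≤ 18000 * B ^ 3 * ε⁻¹ * S ^ (2+α) := by
  have hα0 := hα.1
  set c := m x with hcdef
  set Q : ℂ → ℂ := fun y => Psi Φ φ' (m y) with hQ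
  have hQm : Measurable Q := (h.measurable_Psi hα).comp hm
  have hQb : ∀ y, ‖Q y‖ ≤ 2 := fun y => (h.norm_Psi _).trans (by linarith [hm1 y])
  have hQd : ∀ y, ‖Q y - Psi Φ φ' c‖ ≤ 30 * ‖m y - c‖ ^ α :=
    fun y => h.holder_Psi hα (hm1 y) (hm1 x)
  have D1 := dpow_le hm hm1 hε hS (p := 1) (by norm_num) (by linarith) hSq
  have D2 := dpow_le hm hm1 hε hS (p := 2) (by norm_num) (by linarith) hSq
  have Da := dpow_le hm hm1 hε hS (p := α) hα.1 (by linarith) hSq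
  have I1 := dpow_intOn hm hm1 x c ε (p := 1) (by norm_num)
  have I2 := dpow_intOn hm hm1 x c ε (p := 2) (by norm_num)
  have Ia := dpow_intOn hm hm1 x c ε (p := α) hα.1
  have hκ0 : ∀ y, y ∉ ball x ε → k (x - y) = 0 := fun y hy => hk.zero_out hy
  have hκ1 : ∀ w y, y ∉ ball x ε → fderiv ℝ k (x - y) w = 0 := fun w y hy => by
    rw [hk.fderiv_zero_out hy]; rfl
  have hB2 : 0 ≤ B / ε ^ 2 := by positivity
  have hB3 : ∀ w : ℂ, 0 ≤ B / ε ^ 3 * ‖w‖ := fun w => by positivity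
  -- (a)
  have Ea : ‖cv k m x - c‖ ≤ 5 * B * S := by
    rw [hk.cv_sub hm hm1]
    refine (ker_bound hκ0 (fun y => hk.abs_le _) I1 (fun y _ => by rw [Real.rpow_one])).trans ?_
    refine (mul_le_mul_of_nonneg_left D1 hB2).trans (le_of_eq ?_)
    rw [Real.rpow_one]; field_simp
  -- bounds with derivative
  have Eb' : ∀ w, ‖fderiv ℝ (cv k m) x w‖ ≤ 5 * B * ε⁻¹ * S * ‖w‖ := by
    intro w
    rw [hk.fderiv_cv_sub hm hm1 x w c]
    refine (ker_bound (hκ1 w) (fun y => hk.abs_fderiv_le _ w) I1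
      (fun y _ => by rw [Real.rpow_one])).trans ?_
    refine (mul_le_mul_of_nonneg_left D1 (hB3 w)).trans (le_of_eq ?_)
    rw [Real.rpow_one]; field_simp
  have hIntg0 : Integrable (fun y => k (x - y) • (m y - c)) :=
    hk.integrable (b := 2) (hm.sub_const c) (fun y => (norm_sub_le _ _).trans
      (by linarith [hm1 y, hm1 x])) x
  have hIntg1 : ∀ w, Integrable (fun y => fderiv ℝ k (x - y) w • (m y - c)) := fun w =>
    hk.integrable_fderiv (b := 2) (hm.sub_const c) (fun y => (norm_sub_le _ _).trans
      (by linarith [hm1 y, hm1 x])) x w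
  -- dot products
  have Ed0 : dotL c (cv k m x - c) = -(1/2) * ∫ y, k (x - y) * ‖m y - c‖ ^ (2:ℝ) := by
    rw [hk.cv_sub hm hm1]; exact dot_integral hx hκ0 hball hIntg0
  have Ed1 : ∀ w, dotL c (fderiv ℝ (cv k m) x w)
      = -(1/2) * ∫ y, fderiv ℝ k (x - y) w * ‖m y - c‖ ^ (2:ℝ) := by
    intro w
    rw [hk.fderiv_cv_sub hm hm1 x w c]; exact dot_integral hx (hκ1 w) hball (hIntg1 w)
  have Ee0 : |∫ y, k (x - y) * ‖m y - c‖ ^ (2:ℝ)| ≤ 5 * B * S ^ 2 := by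
    refine (ker_boundR hκ0 (fun y => hk.abs_le _) I2 (fun y _ => by
      rw [abs_of_nonneg (by positivity)])).trans ?_
    refine (mul_le_mul_of_nonneg_left D2 hB2).trans (le_of_eq ?_)
    rw [Real.rpow_two]; field_simp
  have Ee1 : ∀ w, |∫ y, fderiv ℝ k (x - y) w * ‖m y - c‖ ^ (2:ℝ)| ≤ 5 * B * ε⁻¹ * S ^ 2 * ‖w‖ := by
    intro w
    refine (ker_boundR (hκ1 w) (fun y => hk.abs_fderiv_le _ w) I2 (fun y _ => by
      rw [abs_of_nonneg (by positivity)])).trans ?_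
    refine (mul_le_mul_of_nonneg_left D2 (hB3 w)).trans (le_of_eq ?_)
    rw [Real.rpow_two]; field_simp
  -- u
  have hM1 : ‖cv k m x‖ ≤ 1 := hk.norm_cv_le hm1 x
  have hMsq : (cv k m x).re * (cv k m x).re + (cv k m x).im * (cv k m x).im = ‖cv k m x‖ ^ 2 := by
    rw [Complex.sq_norm, Complex.normSq_apply]
  have hu0 : 0 ≤ uf k m x := by
    unfold uf; rw [hMsq]; nlinarith [norm_nonneg (cv k m x)]
  have hcsq : c.re * c.re + c.im * c.im = 1 := by
    rw [← Complex.normSq_apply, ← Complex.sq_norm, hx]; norm_num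
  have hu : uf k m x ≤ 5 * B * S ^ 2 := by
    have e : uf k m x = -2 * dotL c (cv k m x - c) - ‖cv k m x - c‖ ^ 2 := by
      unfold uf
      rw [dotL_apply, Complex.sq_norm, Complex.normSq_apply, Complex.sub_re, Complex.sub_im]
      linear_combination (-1) * hcsq
    rw [e, Ed0]
    have := (abs_le.1 Ee0).2
    nlinarith [sq_nonneg ‖cv k m x - c‖]
  have hDu : ∀ w, |fderiv ℝ (uf k m) x w| ≤ 55 * B ^ 2 * ε⁻¹ * S ^ 2 * ‖w‖ := by
    intro w
    rw [(hk.hasFDerivAt_uf hm hm1 x).2 w]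
    set W := fderiv ℝ (cv k m) x w with hW
    have e : -2 * ((cv k m x).re * W.re + (cv k m x).im * W.im)
        = -2 * dotL c W - 2 * ((cv k m x - c).re * W.re + (cv k m x - c).im * W.im) := by
      rw [dotL_apply, Complex.sub_re, Complex.sub_im]; ring
    rw [e, Ed1 w]
    have h1 := Ee1 w
    have h2 := (dot_le (cv k m x - c) W).trans (mul_le_mul Ea (Eb' w) (norm_nonneg _) (by positivity))
    have h3 : B ≤ B ^ 2 := by nlinarith
    have h4 : 5 * B * ε⁻¹ * S ^ 2 * ‖w‖ ≤ 5 * B ^ 2 * ε⁻¹ * S ^ 2 * ‖w‖ := by gcongr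
    rw [abs_le] at h1 h2 ⊢
    have h5 : 5 * B * S * (5 * B * ε⁻¹ * S * ‖w‖) = 25 * (B ^ 2 * ε⁻¹ * S ^ 2 * ‖w‖) := by ring
    rw [h5] at h2
    have h6 : 5 * B ^ 2 * ε⁻¹ * S ^ 2 * ‖w‖ = 5 * (B ^ 2 * ε⁻¹ * S ^ 2 * ‖w‖) := by ring
    have h7 : 55 * B ^ 2 * ε⁻¹ * S ^ 2 * ‖w‖ = 55 * (B ^ 2 * ε⁻¹ * S ^ 2 * ‖w‖) := by ring
    rw [h6] at h4
    rw [h7]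
    obtain ⟨h1a, h1b⟩ := h1
    obtain ⟨h2a, h2b⟩ := h2
    constructor <;> linarith
  -- (d)
  have hSa : 0 ≤ S ^ α := by positivity
  have Ed : ‖Psi Φ φ' (cv k m x) - cv k Q x‖ ≤ 300 * B * S ^ α := by
    have h1 : ‖cv k Q x - Psi Φ φ' c‖ ≤ 150 * B * S ^ α := by
      rw [hk.cv_sub hQm hQb]
      refine (ker_bound hκ0 (fun y => hk.abs_le _) (Ia.const_mul 30) (fun y _ => hQd y)).trans ?_
      rw [integral_const_mul]
      refine (mul_le_mul_of_nonneg_left (mul_le_mul_of_nonneg_left Da (by norm_num)) hB2).trans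
        (le_of_eq ?_)
      field_simp; ring
    have h2 : ‖Psi Φ φ' (cv k m x) - Psi Φ φ' c‖ ≤ 150 * B * S ^ α := by
      refine (h.holder_Psi hα hM1 (hm1 x)).trans ?_
      have h3 : ‖cv k m x - c‖ ^ α ≤ (5 * B * S) ^ α :=
        Real.rpow_le_rpow (norm_nonneg _) Ea hα.1.le
      rw [Real.mul_rpow (by positivity) hS.le] at h3
      have h4 : (5 * B) ^ α ≤ 5 * B := by
        calc (5 * B) ^ α ≤ (5 * B) ^ (1:ℝ) :=
              Real.rpow_le_rpow_of_exponent_le (by linarith) hα.2.le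
          _ = _ := Real.rpow_one _
      nlinarith
    calc ‖Psi Φ φ' (cv k m x) - cv k Q x‖
        = ‖(Psi Φ φ' (cv k m x) - Psi Φ φ' c) - (cv k Q x - Psi Φ φ' c)‖ := by congr 1; ring
      _ ≤ _ := norm_sub_le _ _
      _ ≤ _ := by linarith
  have Ee : ∀ w, ‖fderiv ℝ (cv k Q) x w‖ ≤ 150 * B * ε⁻¹ * S ^ α * ‖w‖ := by
    intro w
    rw [hk.fderiv_cv_sub hQm hQb x w (Psi Φ φ' c)]
    refine (ker_bound (hκ1 w) (fun y => hk.abs_fderiv_le _ w) (Ia.const_mul 30)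
      (fun y _ => hQd y)).trans ?_
    rw [integral_const_mul]
    refine (mul_le_mul_of_nonneg_left (mul_le_mul_of_nonneg_left Da (by norm_num)) (hB3 w)).trans
        (le_of_eq ?_)
    field_simp; ring
  have Ef : |(fderiv ℝ (cv k Q) x 1).re + (fderiv ℝ (cv k Q) x Complex.I).im|
      ≤ 300 * B * ε⁻¹ * S ^ α := by
    have h1 := (Complex.abs_re_le_norm _).trans (Ee 1)
    have h2 := (Complex.abs_im_le_norm _).trans (Ee Complex.I)
    rw [norm_one] at h1
    rw [Complex.norm_I] at h2
    refine (abs_add_le _ _).trans ?_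
    linarith
  have hSadd : S ^ (2+α) = S ^ 2 * S ^ α := by
    rw [Real.rpow_add hS, Real.rpow_two]
  have F1 := (hDu (Psi Φ φ' (cv k m x) - cv k Q x)).trans
    (mul_le_mul_of_nonneg_left Ed (by positivity))
  have F2 : |uf k m x * ((fderiv ℝ (cv k Q) x 1).re + (fderiv ℝ (cv k Q) x Complex.I).im)|
      ≤ (5 * B * S ^ 2) * (300 * B * ε⁻¹ * S ^ α) := by
    rw [abs_mul, abs_of_nonneg hu0]
    exact mul_le_mul hu Ef (abs_nonneg _) (by positivity)
  have F3 : (5 * B * S ^ 2) * (300 * B * ε⁻¹ * S ^ α) ≤ 1500 * B ^ 3 * ε⁻¹ * (S ^ 2 * S ^ α) := by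
    have : B ^ 2 ≤ B ^ 3 := pow_le_pow_right₀ hB (by norm_num)
    calc _ = 1500 * B ^ 2 * ε⁻¹ * (S ^ 2 * S ^ α) := by ring
      _ ≤ _ := by gcongr
  have F4 : 55 * B ^ 2 * ε⁻¹ * S ^ 2 * (300 * B * S ^ α)
      = 16500 * B ^ 3 * ε⁻¹ * (S ^ 2 * S ^ α) := by ring
  have F5 : 18000 * B ^ 3 * ε⁻¹ * (S ^ 2 * S ^ α) = 16500 * B ^ 3 * ε⁻¹ * (S ^ 2 * S ^ α)
      + 1500 * B ^ 3 * ε⁻¹ * (S ^ 2 * S ^ α) := by ring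
  rw [hSadd, F5]
  rw [F4] at F1
  exact add_le_add F1 (F2.trans F3)

theorem point_est {α : ℝ} {Φ : ℂ → ℂ} {φ' : ℝ → ℂ} (hα : α ∈ Ioo (0:ℝ) 1)
    (h : EntData α Φ φ') {B ε : ℝ} (hB : 1 ≤ B) (hε : 0 < ε)
    {k : ℂ → ℝ} (hk : Ker B ε k) {m : ℂ → ℂ} (hm : Measurable m) (hm1 : ∀ x, ‖m x‖ ≤ 1)
    {x : ℂ} (hx : ‖m x‖ = 1) (hball : ∀ y ∈ ball x ε, ‖m y‖ = 1) :
    |fderiv ℝ (uf k m) x (Psi Φ φ' (cv k m x) - cv k (fun y => Psi Φ φ' (m y)) x)|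
      + |uf k m x * ((fderiv ℝ (cv k (fun y => Psi Φ φ' (m y))) x 1).re
        + (fderiv ℝ (cv k (fun y => Psi Φ φ' (m y))) x Complex.I).im)|
      ≤ 18000 * B ^ 3 * ((ε ^ 3)⁻¹ * ∫ y in ball x ε, ‖m y - m x‖ ^ (2+α)) := by
  set J := ∫ y in ball x ε, ‖m y - m x‖ ^ (2+α) with hJ
  have hJ0 : 0 ≤ J := integral_nonneg fun y => by positivity
  have hα0 := hα.1
  set L := |fderiv ℝ (uf k m) x (Psi Φ φ' (cv k m x) - cv k (fun y => Psi Φ φ' (m y)) x)|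
      + |uf k m x * ((fderiv ℝ (cv k (fun y => Psi Φ φ' (m y))) x 1).re
        + (fderiv ℝ (cv k (fun y => Psi Φ φ' (m y))) x Complex.I).im)| with hL
  have h1 : ∀ T : ℝ, J < T → L ≤ 18000 * B ^ 3 * ((ε ^ 3)⁻¹ * T) := by
    intro T hT
    have hT0 : 0 < T := hJ0.trans_lt hT
    set S := (T / ε ^ 2) ^ (1 / (2 + α)) with hSdef
    have hS : 0 < S := by positivity
    have hSq : S ^ (2 + α) = T / ε ^ 2 := by
      rw [hSdef, ← Real.rpow_mul (by positivity), one_div_mul_cancel (by linarith), Real.rpow_one]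
    have := point_est_S hα h hB hε hS hk hm hm1 hx hball (by
      rw [hSq]; rw [mul_div_cancel₀ _ (by positivity)]; exact hT.le)
    rw [hSq] at this
    refine this.trans (le_of_eq ?_)
    field_simp
  have h2 : Tendsto (fun T => 18000 * B ^ 3 * ((ε ^ 3)⁻¹ * T)) (𝓝[>] J)
      (𝓝 (18000 * B ^ 3 * ((ε ^ 3)⁻¹ * J))) := by
    have : Continuous (fun T => 18000 * B ^ 3 * ((ε ^ 3)⁻¹ * T)) := by fun_prop
    exact (this.tendsto J).mono_left nhdsWithin_le_nhds
  exact ge_of_tendsto h2 (eventually_nhdsWithin_of_forall fun T hT => h1 T hT)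

/-- Divergence of a vector field on the plane. -/
def dvg (F : ℂ → ℂ) (x : ℂ) : ℝ := (fderiv ℝ F x 1).re + (fderiv ℝ F x Complex.I).im

theorem clm_decomp (L : ℂ →L[ℝ] ℝ) (z : ℂ) : L z = L 1 * z.re + L Complex.I * z.im := by
  conv_lhs => rw [← Complex.re_add_im z]
  have h : ((z.re : ℂ) + z.im * Complex.I) = z.re • (1:ℂ) + z.im • Complex.I := by simp
  rw [h, map_add, map_smul, map_smul]; simp [mul_comm]

theorem ibp1 {f ζ : ℂ → ℝ} (hf : Differentiable ℝ f) (hζ : ContDiff ℝ (⊤ : ℕ∞) ζ)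
    (hcs : HasCompactSupport ζ) {C : ℝ} (hC : ∀ x ∈ tsupport ζ, ‖fderiv ℝ f x‖ ≤ C) (v : ℂ) :
    ∫ x, fderiv ℝ ζ x v * f x = - ∫ x, ζ x * fderiv ℝ f x v ∧
    Integrable (fun x => fderiv ℝ ζ x v * f x) ∧ Integrable (fun x => ζ x * fderiv ℝ f x v) := by
  have hζ' : Continuous (fun x => fderiv ℝ ζ x v) :=
    (hζ.continuous_fderiv (by simp)).clm_apply continuous_const
  have hcs' : HasCompactSupport (fun x => fderiv ℝ ζ x v) :=
    (hcs.fderiv ℝ).comp_left (g := fun L : ℂ →L[ℝ] ℝ => L v) rfl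
  have i1 : Integrable (fun x => fderiv ℝ ζ x v * f x) :=
    (hζ'.mul hf.continuous).integrable_of_hasCompactSupport (hcs'.mul_right)
  have i2 : Integrable (fun x => ζ x * fderiv ℝ f x v) := by
    have h1 : Integrable (fun x => |ζ x| * (C * ‖v‖)) :=
      (hζ.continuous.integrable_of_hasCompactSupport hcs).abs.mul_const _
    refine h1.mono (hζ.continuous.measurable.mul (measurable_fderiv_apply_const ℝ f v)).aestronglyMeasurable
      (Eventually.of_forall fun x => ?_)
    by_cases hx : x ∈ tsupport ζ
    · rw [norm_mul, Real.norm_eq_abs (ζ x)]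
      have h2 : ‖fderiv ℝ f x v‖ ≤ C * ‖v‖ :=
        ((fderiv ℝ f x).le_opNorm v).trans (mul_le_mul_of_nonneg_right (hC x hx) (norm_nonneg _))
      exact (mul_le_mul_of_nonneg_left h2 (abs_nonneg _)).trans (le_abs_self _)
    · rw [image_eq_zero_of_notMem_tsupport hx]; simp
  have i3 : Integrable (fun x => ζ x * f x) :=
    (hζ.continuous.mul hf.continuous).integrable_of_hasCompactSupport (hcs.mul_right)
  refine ⟨?_, i1, i2⟩
  have := integral_mul_fderiv_eq_neg_fderiv_mul_of_integrable (f := ζ) (g := f) (v := v) (μ := volume)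
    i1 i2 i3 (fun x _ => hζ.differentiable (by simp) x) (fun x _ => hf x)
  rw [this, neg_neg]

theorem ibp {F : ℂ → ℂ} {ζ : ℂ → ℝ} (hF : Differentiable ℝ F) (hζ : ContDiff ℝ (⊤ : ℕ∞) ζ)
    (hcs : HasCompactSupport ζ) {C : ℝ} (hC : ∀ x ∈ tsupport ζ, ‖fderiv ℝ F x‖ ≤ C) :
    ∫ x, fderiv ℝ ζ x (F x) = - ∫ x, ζ x * dvg F x ∧
    Integrable (fun x => ζ x * dvg F x) := by
  have hre : ∀ x, HasFDerivAt (fun x => (F x).re) (Complex.reCLM.comp (fderiv ℝ F x)) x :=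
    fun x => Complex.reCLM.hasFDerivAt.comp x (hF x).hasFDerivAt
  have him : ∀ x, HasFDerivAt (fun x => (F x).im) (Complex.imCLM.comp (fderiv ℝ F x)) x :=
    fun x => Complex.imCLM.hasFDerivAt.comp x (hF x).hasFDerivAt
  obtain ⟨a1, a2, a3⟩ := ibp1 (f := fun x => (F x).re) (fun x => (hre x).differentiableAt) hζ hcs
    (C := C) (fun x hx => by
      rw [(hre x).fderiv]
      refine ((ContinuousLinearMap.opNorm_comp_le _ _)).trans ?_
      rw [Complex.reCLM_norm, one_mul]; exact hC x hx) 1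
  obtain ⟨b1, b2, b3⟩ := ibp1 (f := fun x => (F x).im) (fun x => (him x).differentiableAt) hζ hcs
    (C := C) (fun x hx => by
      rw [(him x).fderiv]
      refine ((ContinuousLinearMap.opNorm_comp_le _ _)).trans ?_
      rw [Complex.imCLM_norm, one_mul]; exact hC x hx) Complex.I
  have e : ∀ x, ζ x * dvg F x = ζ x * fderiv ℝ (fun x => (F x).re) x 1
      + ζ x * fderiv ℝ (fun x => (F x).im) x Complex.I := by
    intro x
    rw [(hre x).fderiv, (him x).fderiv, dvg]; simp; ring
  simp_rw [e]
  refine ⟨?_, a3.add b3⟩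
  rw [integral_add a3 b3, neg_add, ← a1, ← b1, ← integral_add a2 b2]
  congr 1; ext x
  exact clm_decomp _ _

theorem div0 {Ω : Set ℂ} {m : ℂ → ℂ} (hm : Measurable m) (hm1 : ∀ x, ‖m x‖ ≤ 1)
    (hdiv : DivFree Ω m) {B ε : ℝ} {k : ℂ → ℝ} (hk : Ker B ε k) {x : ℂ} (hx : ball x ε ⊆ Ω) :
    dvg (cv k m) x = 0 := by
  have hz : ∀ y, HasFDerivAt (fun y => k (x - y)) (-(fderiv ℝ k (x - y))) y := by
    intro y
    have h1 : HasFDerivAt k (fderiv ℝ k (x - y)) (x - y) :=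
      (hk.smooth.differentiable (by simp) _).hasFDerivAt
    have h2 : HasFDerivAt (fun y => x - y) (-(ContinuousLinearMap.id ℝ ℂ)) y :=
      (hasFDerivAt_id y).const_sub x
    have h3 : HasFDerivAt (fun y => k (x - y))
        ((fderiv ℝ k (x - y)).comp (-(ContinuousLinearMap.id ℝ ℂ))) y := HasFDerivAt.comp y h1 h2
    have e : (fderiv ℝ k (x - y)).comp (-(ContinuousLinearMap.id ℝ ℂ)) = -(fderiv ℝ k (x - y)) := by
      refine ContinuousLinearMap.ext fun w => ?_
      simp
    rwa [e] at h3
  have ht : TestFun Ω (fun y => k (x - y)) := by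
    refine ⟨hk.smooth.comp (contDiff_const.sub contDiff_id),
      hk.cs.comp_homeomorph (Homeomorph.subLeft x), ?_⟩
    refine Subset.trans (fun y hy => ?_) hx
    have h1 : x - y ∈ tsupport k :=
      tsupport_comp_subset_preimage k (f := fun y => x - y) (by fun_prop) hy
    have := hk.supp h1
    rw [mem_ball_zero_iff] at this
    rw [mem_ball, dist_comm, dist_eq_norm]; exact this
  have h := hdiv _ ht
  simp_rw [fun y => (hz y).fderiv] at h
  rw [setIntegral_eq_integral_of_forall_compl_eq_zero (fun y hy => by
    rw [hk.fderiv_zero_out (fun h => hy (hx h))]; simp)] at h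
  unfold dvg
  rw [hk.fderiv_cv hm hm1, hk.fderiv_cv hm hm1]
  have i1 := hk.integrable_fderiv hm hm1 x 1
  have i2 := hk.integrable_fderiv hm hm1 x Complex.I
  have e1 := Complex.reCLM.integral_comp_comm i1
  have e2 := Complex.imCLM.integral_comp_comm i2
  simp only [Complex.reCLM_apply, Complex.imCLM_apply] at e1 e2
  have j1 : Integrable (fun y => ((fderiv ℝ k (x - y)) 1 • m y).re) :=
    Complex.reCLM.integrable_comp i1
  have j2 : Integrable (fun y => ((fderiv ℝ k (x - y)) Complex.I • m y).im) :=
    Complex.imCLM.integrable_comp i2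
  rw [← e1, ← e2, ← integral_add j1 j2]
  rw [← neg_eq_zero, ← integral_neg, ← h]
  congr 1; ext y
  simp only [ContinuousLinearMap.neg_apply]
  rw [clm_decomp (fderiv ℝ k (x - y)) (m y)]
  simp

/-- The set of admissible pairs of points at distance less than `ε`. -/
def pairSet (Ω : Set ℂ) (ε : ℝ) : Set (ℂ × ℂ) := {p | p.1 ∈ Ω ∧ p.2 ∈ Ω ∧ dist p.2 p.1 < ε}

/-- The increment density. -/
def GG (Ω : Set ℂ) (m : ℂ → ℂ) (q ε : ℝ) (p : ℂ × ℂ) : ℝ≥0∞ :=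
  (pairSet Ω ε).indicator (fun p => ‖m p.2 - m p.1‖ₑ ^ q) p

/-- Local averages of increments, in extended reals. -/
def gL (Ω : Set ℂ) (m : ℂ → ℂ) (q ε : ℝ) (x : ℂ) : ℝ≥0∞ := ∫⁻ y, GG Ω m q ε (x, y)

/-- Local averages of increments. -/
def gE (Ω : Set ℂ) (m : ℂ → ℂ) (q ε : ℝ) (x : ℂ) : ℝ := (ε ^ 3)⁻¹ * (gL Ω m q ε x).toReal

theorem measurable_GG {Ω : Set ℂ} {m : ℂ → ℂ} (hΩ : IsOpen Ω) (hm : Measurable m) (q ε : ℝ) :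
    Measurable (GG Ω m q ε) := by
  refine Measurable.indicator ?_ ?_
  · exact (((hm.comp measurable_snd).sub (hm.comp measurable_fst)).enorm).pow_const q
  · have h1 : MeasurableSet {p : ℂ × ℂ | p.1 ∈ Ω} := measurable_fst hΩ.measurableSet
    have h2 : MeasurableSet {p : ℂ × ℂ | p.2 ∈ Ω} := measurable_snd hΩ.measurableSet
    have h3 : MeasurableSet {p : ℂ × ℂ | dist p.2 p.1 < ε} :=
      measurableSet_lt (measurable_snd.dist measurable_fst) measurable_const
    exact h1.inter (h2.inter h3)

theorem measurable_gL {Ω : Set ℂ} {m : ℂ → ℂ} (hΩ : IsOpen Ω) (hm : Measurable m) (q ε : ℝ) :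
    Measurable (gL Ω m q ε) := (measurable_GG hΩ hm q ε).lintegral_prod_right'

theorem gL_lt_top {Ω : Set ℂ} {m : ℂ → ℂ} (hm1 : ∀ x, ‖m x‖ ≤ 1) {q : ℝ} (hq : 0 < q) (ε : ℝ)
    (x : ℂ) : gL Ω m q ε x < ⊤ := by
  have h : gL Ω m q ε x ≤ ∫⁻ y in ball x ε, (2:ℝ≥0∞) ^ q := by
    rw [gL, ← lintegral_indicator measurableSet_ball]
    refine lintegral_mono fun y => ?_
    by_cases hy : (x, y) ∈ pairSet Ω ε
    · have hy' : y ∈ ball x ε := hy.2.2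
      rw [GG, indicator_of_mem hy, indicator_of_mem hy']
      refine ENNReal.rpow_le_rpow ?_ hq.le
      have : ‖m y - m x‖ ≤ 2 := (norm_sub_le _ _).trans (by linarith [hm1 y, hm1 x])
      rw [← ofReal_norm_eq_enorm]
      exact (ENNReal.ofReal_le_ofReal this).trans (by simp)
    · rw [GG, indicator_of_notMem hy]; exact zero_le
  refine h.trans_lt ?_
  rw [setLIntegral_const]
  exact ENNReal.mul_lt_top (ENNReal.rpow_lt_top_of_nonneg hq.le (by simp)) measure_ball_lt_top

theorem gL_eq {Ω : Set ℂ} {m : ℂ → ℂ} (hm : Measurable m) {q : ℝ} (hq : 0 < q) {ε : ℝ} {x : ℂ}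
    (hε : 0 < ε) (hx : ball x ε ⊆ Ω) :
    (gL Ω m q ε x).toReal = ∫ y in ball x ε, ‖m y - m x‖ ^ q := by
  rw [integral_eq_lintegral_of_nonneg_ae (Eventually.of_forall fun y => by positivity)
    (((hm.sub_const _).norm.pow_const q).aestronglyMeasurable)]
  congr 1
  rw [gL, ← lintegral_indicator measurableSet_ball]
  congr 1; ext y
  by_cases hy : y ∈ ball x ε
  · have hy' : (x, y) ∈ pairSet Ω ε := ⟨hx (mem_ball_self hε), hx hy, hy⟩
    rw [GG, indicator_of_mem hy', indicator_of_mem hy, ← ENNReal.ofReal_rpow_of_nonneg (norm_nonneg _) hq.le,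
      ofReal_norm_eq_enorm]
  · have hy' : (x, y) ∉ pairSet Ω ε := fun h => hy h.2.2
    rw [GG, indicator_of_notMem hy', indicator_of_notMem hy]

theorem besov_incr {Ω : Set ℂ} {m : ℂ → ℂ} {q : ℝ} (hq : 0 < q) (h : ℂ) :
    ∫⁻ x in Ω ∩ {x | x + h ∈ Ω}, ‖m (x + h) - m x‖ₑ ^ q ≤ ‖h‖ₑ * besovE Ω q (1/q) m ^ q := by
  by_cases h0 : h = 0
  · subst h0
    simp [ENNReal.zero_rpow_of_pos hq]
  set I := ∫⁻ x in Ω ∩ {x | x + h ∈ Ω}, ‖m (x + h) - m x‖ₑ ^ q with hI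
  have h1 : ‖h‖ₑ ^ (-(1/q)) * I ^ (1/q) ≤ besovE Ω q (1/q) m :=
    le_iSup (fun h : {h : ℂ // h ≠ 0} => (‖h.1‖₊ : ℝ≥0∞) ^ (-(1/q)) *
      (∫⁻ x in Ω ∩ {x | x + h.1 ∈ Ω}, (‖m (x + h.1) - m x‖₊ : ℝ≥0∞) ^ q) ^ (1/q)) ⟨h, h0⟩
  have h2 := ENNReal.rpow_le_rpow h1 hq.le
  rw [ENNReal.mul_rpow_of_nonneg _ _ hq.le, ← ENNReal.rpow_mul, ← ENNReal.rpow_mul,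
    neg_mul, one_div_mul_cancel hq.ne', ENNReal.rpow_one, ENNReal.rpow_neg_one] at h2
  have hh0 : ‖h‖ₑ ≠ 0 := by simpa using h0
  calc I = ‖h‖ₑ * (‖h‖ₑ⁻¹ * I) := by
        rw [← mul_assoc, ENNReal.mul_inv_cancel hh0 enorm_ne_top, one_mul]
    _ ≤ _ := by gcongr

theorem lintegral_gL_le {Ω : Set ℂ} {m : ℂ → ℂ} (hΩ : IsOpen Ω) (hm : Measurable m) {q ε : ℝ}
    (hq : 0 < q) (hε : 0 < ε) :
    ∫⁻ x, gL Ω m q ε x ≤ ENNReal.ofReal (4 * ε ^ 3) * besovE Ω q (1/q) m ^ q := by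
  have hG := measurable_GG hΩ hm q ε
  have e1 : ∀ x, gL Ω m q ε x = ∫⁻ h, GG Ω m q ε (x, x + h) := fun x =>
    (lintegral_add_left_eq_self (fun y => GG Ω m q ε (x, y)) x).symm
  simp_rw [e1]
  rw [lintegral_lintegral_swap]
  swap
  · exact (hG.comp (measurable_fst.prodMk (measurable_fst.add measurable_snd))).aemeasurable
  calc ∫⁻ h, ∫⁻ x, GG Ω m q ε (x, x + h)
      ≤ ∫⁻ h, (ball (0:ℂ) ε).indicator (fun _ => ENNReal.ofReal ε * besovE Ω q (1/q) m ^ q) h := by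
        refine lintegral_mono fun h => ?_
        by_cases hh : h ∈ ball (0:ℂ) ε
        · rw [indicator_of_mem hh]
          have h1 : ∫⁻ x, GG Ω m q ε (x, x + h)
              ≤ ∫⁻ x in Ω ∩ {x | x + h ∈ Ω}, ‖m (x + h) - m x‖ₑ ^ q := by
            have hms : MeasurableSet (Ω ∩ {x | x + h ∈ Ω}) :=
              hΩ.measurableSet.inter ((measurable_id.add_const h) hΩ.measurableSet)
            rw [← lintegral_indicator hms]
            refine lintegral_mono fun x => ?_
            by_cases hx : (x, x + h) ∈ pairSet Ω ε
            · have hx' : x ∈ Ω ∩ {x | x + h ∈ Ω} := ⟨hx.1, hx.2.1⟩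
              rw [GG, indicator_of_mem hx, indicator_of_mem hx']
            · rw [GG, indicator_of_notMem hx]; exact zero_le
          refine (h1.trans (besov_incr hq h)).trans ?_
          gcongr
          rw [← ofReal_norm_eq_enorm]
          exact ENNReal.ofReal_le_ofReal (mem_ball_zero_iff.1 hh).le
        · rw [indicator_of_notMem hh]
          have : ∀ x, GG Ω m q ε (x, x + h) = 0 := fun x => by
            rw [GG, indicator_of_notMem]
            intro hx
            apply hh
            have := hx.2.2
            simpa [dist_eq_norm] using this
          simp [this]
    _ = ENNReal.ofReal ε * besovE Ω q (1/q) m ^ q * volume (ball (0:ℂ) ε) := by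
        rw [lintegral_indicator measurableSet_ball, setLIntegral_const]
    _ ≤ ENNReal.ofReal ε * besovE Ω q (1/q) m ^ q * ENNReal.ofReal (4 * ε ^ 2) := by
        gcongr
        have := vol_ball_le 0 hε
        rw [← ENNReal.ofReal_toReal (measure_ball_lt_top (x := (0:ℂ)) (r := ε) (μ := volume)).ne]
        exact ENNReal.ofReal_le_ofReal this
    _ = _ := by
        rw [mul_right_comm, ← ENNReal.ofReal_mul hε.le]
        congr 2; ring

theorem gE_facts {Ω : Set ℂ} {m : ℂ → ℂ} (hΩ : IsOpen Ω) (hm : Measurable m)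
    (hm1 : ∀ x, ‖m x‖ ≤ 1) {q ε : ℝ}
    (hq : 0 < q) (hε : 0 < ε) (hb : besovE Ω q (1/q) m < ⊤) :
    (∀ x, 0 ≤ gE Ω m q ε x) ∧ Integrable (gE Ω m q ε) ∧
      ∫ x, gE Ω m q ε x ≤ (4 * besovE Ω q (1/q) m ^ q).toReal := by
  have hle := lintegral_gL_le hΩ hm hq hε
  have hbq : besovE Ω q (1/q) m ^ q < ⊤ := ENNReal.rpow_lt_top_of_nonneg hq.le hb.ne
  have hfin : ∫⁻ x, gL Ω m q ε x ≠ ⊤ :=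
    (hle.trans_lt (ENNReal.mul_lt_top ENNReal.ofReal_lt_top hbq)).ne
  have hmeas := measurable_gL hΩ hm q ε
  refine ⟨fun x => by unfold gE; positivity, ?_, ?_⟩
  · exact (integrable_toReal_of_lintegral_ne_top hmeas.aemeasurable hfin).const_mul _
  · unfold gE
    rw [integral_const_mul, integral_toReal hmeas.aemeasurable
      (Eventually.of_forall fun x => gL_lt_top hm1 hq ε x)]
    have h1 := ENNReal.toReal_mono (ENNReal.mul_lt_top ENNReal.ofReal_lt_top hbq).ne hle
    rw [ENNReal.toReal_mul, ENNReal.toReal_ofReal (by positivity)] at h1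
    rw [ENNReal.toReal_mul]
    calc (ε ^ 3)⁻¹ * _ ≤ (ε ^ 3)⁻¹ * (4 * ε ^ 3 * (besovE Ω q (1/q) m ^ q).toReal) := by gcongr
      _ = _ := by
        simp only [ENNReal.toReal_ofNat]
        field_simp

theorem le_split {d η q : ℝ} (hd : 0 ≤ d) (hη : 0 < η) (hq : 1 ≤ q) :
    d ≤ η + η ^ (1 - q) * d ^ q := by
  rcases le_total d η with h1 | h1
  · have : 0 ≤ η ^ (1 - q) * d ^ q := by positivity
    linarith
  · have hd' : 0 < d := hη.trans_le h1
    have h2 : d ^ (1 - q) ≤ η ^ (1 - q) :=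
      Real.rpow_le_rpow_of_nonpos hη h1 (by linarith)
    have h3 : d = d ^ (1 - q) * d ^ q := by
      rw [← Real.rpow_add hd']; simp
    have : d ^ (1 - q) * d ^ q ≤ η ^ (1 - q) * d ^ q := by gcongr
    linarith

theorem cv_close {B ε η q : ℝ} (hB : 1 ≤ B) (hε : 0 < ε) (hη : 0 < η) (hq : 1 ≤ q)
    {k : ℂ → ℝ} (hk : Ker B ε k) {Ω : Set ℂ} {m : ℂ → ℂ} (hm : Measurable m)
    (hm1 : ∀ x, ‖m x‖ ≤ 1) {x : ℂ} (hx : ball x ε ⊆ Ω) :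
    ‖cv k m x - m x‖ ≤ B * (4 * η + η ^ (1 - q) * ε * gE Ω m q ε x) := by
  have hq0 : 0 < q := by linarith
  have hJ : ∫ y in ball x ε, ‖m y - m x‖ ^ q = ε ^ 3 * gE Ω m q ε x := by
    rw [gE, gL_eq hm hq0 hε hx]; field_simp
  have Iq := dpow_intOn hm hm1 x (m x) ε hq0
  have hc : IntegrableOn (fun _ : ℂ => η) (ball x ε) :=
    integrableOn_const (measure_ball_lt_top).ne
  rw [hk.cv_sub hm hm1]
  refine (ker_bound (fun y hy => hk.zero_out hy) (fun y => hk.abs_le _)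
    (hc.add (Iq.const_mul (η ^ (1 - q)))) (fun y _ => le_split (norm_nonneg _) hη hq)).trans ?_
  simp only [Pi.add_apply]
  rw [integral_add hc (Iq.const_mul _), integral_const_mul, hJ]
  have h1 : ∫ y in ball x ε, η ≤ 4 * ε ^ 2 * η := by
    have := vol_ball_le x hε
    simp only [integral_const, MeasurableSet.univ, measureReal_restrict_apply, univ_inter, smul_eq_mul]
    gcongr
  calc B / ε ^ 2 * ((∫ y in ball x ε, η) + η ^ (1 - q) * (ε ^ 3 * gE Ω m q ε x))
      ≤ B / ε ^ 2 * (4 * ε ^ 2 * η + η ^ (1 - q) * (ε ^ 3 * gE Ω m q ε x)) := by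
        gcongr
    _ = _ := by field_simp

theorem norm_dExt_le {γ : ℝ} {z P : ℂ} (hz : ‖z‖ ≤ 1) (hγ : |γ| ≤ ‖z‖ ^ 2) (hP : ‖P‖ ≤ 2 * ‖z‖) :
    ‖dExt γ z P‖ ≤ 5 := by
  refine ContinuousLinearMap.opNorm_le_bound _ (by norm_num) fun w => ?_
  rw [dExt_apply]
  refine (norm_add_le _ _).trans ?_
  rw [norm_smul, norm_smul, Real.norm_eq_abs, Real.norm_eq_abs, abs_mul]
  have h1 := dot_le z w
  have h2 : |γ| ≤ 1 := hγ.trans (pow_le_one₀ (norm_nonneg _) hz)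
  have h3 : ‖P‖ ≤ 2 := by linarith
  have h4 : |z.re * w.re + z.im * w.im| ≤ ‖w‖ :=
    h1.trans (mul_le_of_le_one_left (norm_nonneg _) hz)
  have h5 : |z.re * w.re + z.im * w.im| * ‖P‖ ≤ ‖w‖ * 2 :=
    mul_le_mul h4 h3 (norm_nonneg _) (norm_nonneg _)
  have h6 : |γ| * ‖w‖ ≤ 1 * ‖w‖ := by gcongr
  rw [abs_of_pos (by norm_num : (0:ℝ) < 2)]
  nlinarith

theorem EntData.lip_ext {α : ℝ} {Φ : ℂ → ℂ} {φ' : ℝ → ℂ} (h : EntData α Φ φ') {z w : ℂ}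
    (hz : ‖z‖ ≤ 1) (hw : ‖w‖ ≤ 1) : ‖extPhi Φ z - extPhi Φ w‖ ≤ 5 * ‖z - w‖ := by
  have hd : Differentiable ℝ (extPhi Φ) := fun z => by
    obtain ⟨γ, -, h2⟩ := h.hasFDerivAt_ext z
    exact h2.differentiableAt
  refine (convex_closedBall (0:ℂ) 1).norm_image_sub_le_of_norm_fderiv_le (𝕜 := ℝ)
    (fun y _ => hd y) (fun y hy => ?_) (by simpa using hw) (by simpa using hz)
  obtain ⟨γ, h1, h2⟩ := h.hasFDerivAt_ext y
  rw [h2.fderiv]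
  exact norm_dExt_le (by simpa using hy) h1 (h.norm_Psi y)

set_option maxHeartbeats 1000000 in
theorem eps_est {α : ℝ} {Φ : ℂ → ℂ} {φ' : ℝ → ℂ} (hα : α ∈ Ioo (0:ℝ) 1)
    (h : EntData α Φ φ') {B ε η : ℝ} (hB : 1 ≤ B) (hε : 0 < ε) (hη : 0 < η)
    {k : ℂ → ℝ} (hk : Ker B ε k) {Ω : Set ℂ} (hΩ : IsOpen Ω) {m : ℂ → ℂ} (hm : Measurable m)
    (hm1 : ∀ x, ‖m x‖ ≤ 1) (hmΩ : ∀ x ∈ Ω, ‖m x‖ = 1) (hdiv : DivFree Ω m)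
    (hb : besovE Ω (2+α) (1/(2+α)) m < ⊤) {ζ : ℂ → ℝ} (hζ : TestFun Ω ζ)
    (hK : ∀ x ∈ tsupport ζ, ball x ε ⊆ Ω) {Z : ℝ} (hZ : ∀ x, ‖fderiv ℝ ζ x‖ ≤ Z) :
    |∫ x in Ω, fderiv ℝ ζ x (Φ (m x))| ≤ 18000 * B ^ 3 * (∫ x, |ζ x| * gE Ω m (2+α) ε x)
      + 9 * Z * B * (4 * η * volume.real (tsupport ζ)
        + η ^ (1 - (2+α)) * ε * ∫ x, gE Ω m (2+α) ε x) := by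
  have hα0 := hα.1
  have hq0 : 0 < 2 + α := by linarith
  obtain ⟨g0, gi, -⟩ := gE_facts hΩ hm hm1 hq0 hε hb
  obtain ⟨hζs, hζc, hζΩ⟩ := hζ
  have hZ0 : 0 ≤ Z := (norm_nonneg _).trans (hZ 0)
  set Q : ℂ → ℂ := fun y => Psi Φ φ' (m y) with hQ
  have hQm : Measurable Q := (h.measurable_Psi hα).comp hm
  have hQb : ∀ y, ‖Q y‖ ≤ 2 := fun y => (h.norm_Psi _).trans (by linarith [hm1 y])
  set M := cv k m with hM
  set P := cv k Q with hP
  set u := uf k m with hu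
  have hMs : ContDiff ℝ (⊤ : ℕ∞) M := hk.contDiff hm hm1
  have hPs : ContDiff ℝ (⊤ : ℕ∞) P := hk.contDiff hQm hQb
  have hus : ContDiff ℝ (⊤ : ℕ∞) u := (hk.hasFDerivAt_uf hm hm1 0).1
  have hM1 : ∀ x, ‖M x‖ ≤ 1 := fun x => hk.norm_cv_le hm1 x
  have hP2 : ∀ x, ‖P x‖ ≤ 2 := fun x => hk.norm_cv_le hQb x
  have hext : Differentiable ℝ (extPhi Φ) := fun z => by
    obtain ⟨γ, -, h2⟩ := h.hasFDerivAt_ext z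
    exact h2.differentiableAt
  set F : ℂ → ℂ := fun x => extPhi Φ (M x) + u x • P x with hF
  have hups : ContDiff ℝ (⊤ : ℕ∞) (fun x => u x • P x) := hus.smul hPs
  have hFd : ∀ x, ∃ γ : ℝ, |γ| ≤ ‖M x‖ ^ 2 ∧ HasFDerivAt F
      ((dExt γ (M x) (Psi Φ φ' (M x))).comp (fderiv ℝ M x) + fderiv ℝ (fun x => u x • P x) x) x := by
    intro x
    obtain ⟨γ, h1, h2⟩ := h.hasFDerivAt_ext (M x)
    refine ⟨γ, h1, ?_⟩
    have h3 : HasFDerivAt (fun x => extPhi Φ (M x))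
        ((dExt γ (M x) (Psi Φ φ' (M x))).comp (fderiv ℝ M x)) x :=
      HasFDerivAt.comp x h2 (hMs.differentiable (by simp) x).hasFDerivAt
    exact h3.add (hups.differentiable (by simp) x).hasFDerivAt
  have hFdiff : Differentiable ℝ F := fun x => by
    obtain ⟨γ, -, h2⟩ := hFd x
    exact h2.differentiableAt
  have hupd : ∀ x w, fderiv ℝ (fun x => u x • P x) x w = u x • fderiv ℝ P x w + fderiv ℝ u x w • P x := by
    intro x w
    have := ((hus.differentiable (by simp) x).hasFDerivAt.smul (hPs.differentiable (by simp) x).hasFDerivAt)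
    have h2 : HasFDerivAt (fun x => u x • P x) _ x := this
    rw [h2.fderiv]
    simp
  -- bound for the derivative on the support
  obtain ⟨C, hC⟩ : ∃ C, ∀ x ∈ tsupport ζ, ‖fderiv ℝ F x‖ ≤ C := by
    have hcont : Continuous (fun x => 5 * ‖fderiv ℝ M x‖ + ‖fderiv ℝ (fun x => u x • P x) x‖) := by
      have c1 := hMs.continuous_fderiv (by simp)
      have c2 := hups.continuous_fderiv (by simp)
      fun_prop
    obtain ⟨C, hC⟩ := (hζc.isCompact).exists_bound_of_continuousOn hcont.continuousOn
    refine ⟨C, fun x hx => ?_⟩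
    obtain ⟨γ, h1, h2⟩ := hFd x
    rw [h2.fderiv]
    refine le_trans ?_ ((le_abs_self _).trans (hC x hx))
    refine (norm_add_le _ _).trans ?_
    gcongr
    refine (ContinuousLinearMap.opNorm_comp_le _ _).trans ?_
    gcongr
    exact norm_dExt_le (hM1 x) h1 (h.norm_Psi _)
  obtain ⟨ibpE, ibpI⟩ := ibp hFdiff hζs hζc hC
  -- divergence of F on the support
  have hdF : ∀ x ∈ tsupport ζ, |dvg F x| ≤ 18000 * B ^ 3 * gE Ω m (2+α) ε x := by
    intro x hx
    have hxb := hK x hx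
    have hxΩ : x ∈ Ω := hζΩ hx
    obtain ⟨γ, h1, h2⟩ := hFd x
    have e : dvg F x = -(fderiv ℝ u x (Psi Φ φ' (M x) - P x)) + u x * dvg P x := by
      have hd0 : dvg M x = 0 := div0 hm hm1 hdiv hk hxb
      have hDu := (hk.hasFDerivAt_uf hm hm1 x).2
      rw [map_sub, clm_decomp (fderiv ℝ u x) (Psi Φ φ' (M x)), clm_decomp (fderiv ℝ u x) (P x)]
      unfold dvg at hd0 ⊢
      rw [h2.fderiv]
      simp only [ContinuousLinearMap.add_apply, ContinuousLinearMap.comp_apply, dExt_apply, hupd,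
        Complex.add_re, Complex.add_im, Complex.smul_re, Complex.smul_im, smul_eq_mul]
      rw [hDu 1, hDu Complex.I]
      linear_combination γ * hd0
    rw [e]
    have hp := point_est hα h hB hε hk hm hm1 (hmΩ x hxΩ) (fun y hy => hmΩ y (hxb hy))
    rw [← gL_eq hm hq0 hε hxb] at hp
    refine le_trans ?_ hp
    refine (abs_add_le _ _).trans ?_
    rw [abs_neg]
    exact le_rfl
  obtain ⟨Bζ, hBζ⟩ := hζc.exists_bound_of_continuous hζs.continuous
  have i1 : Integrable (fun x => |ζ x| * gE Ω m (2+α) ε x) :=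
    gi.bdd_mul (c := Bζ) hζs.continuous.abs.aestronglyMeasurable
      (Eventually.of_forall fun x => by simpa using hBζ x)
  have main : |∫ x, fderiv ℝ ζ x (F x)| ≤ 18000 * B ^ 3 * (∫ x, |ζ x| * gE Ω m (2+α) ε x) := by
    rw [ibpE, abs_neg, ← integral_const_mul, ← Real.norm_eq_abs]
    refine norm_integral_le_of_norm_le (i1.const_mul _) (Eventually.of_forall fun x => ?_)
    rw [norm_mul, Real.norm_eq_abs, Real.norm_eq_abs]
    by_cases hx : x ∈ tsupport ζ
    · calc |ζ x| * |dvg F x| ≤ |ζ x| * (18000 * B ^ 3 * gE Ω m (2+α) ε x) := by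
            gcongr; exact hdF x hx
        _ = _ := by ring
    · rw [image_eq_zero_of_notMem_tsupport hx]; simp
  -- the error term
  have hDz : ∀ x, x ∉ tsupport ζ → fderiv ℝ ζ x = 0 := fun x hx => by
    by_contra hne
    exact hx (support_fderiv_subset ℝ (Function.mem_support.2 hne))
  have e0 : ∫ x in Ω, fderiv ℝ ζ x (Φ (m x)) = ∫ x, fderiv ℝ ζ x (extPhi Φ (m x)) := by
    rw [setIntegral_eq_integral_of_forall_compl_eq_zero (fun x hx => by
      rw [hDz x (fun h => hx (hζΩ h))]; simp)]
    congr 1; ext x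
    by_cases hx : x ∈ tsupport ζ
    · rw [extPhi_of_norm_one Φ (hmΩ x (hζΩ hx))]
    · rw [hDz x hx]; simp
  have hζ' : Continuous (fderiv ℝ ζ) := hζs.continuous_fderiv (by simp)
  have hKm : MeasurableSet (tsupport ζ) := (isClosed_tsupport ζ).measurableSet
  have hKfin : volume (tsupport ζ) < ⊤ := hζc.isCompact.measure_lt_top
  have iA : ∀ (f : ℂ → ℂ) (b : ℝ), Measurable f → (∀ x, ‖f x‖ ≤ b) →
      Integrable (fun x => fderiv ℝ ζ x (f x)) := by
    intro f b hf hfb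
    have hb0 : 0 ≤ b := (norm_nonneg _).trans (hfb 0)
    have : Integrable ((tsupport ζ).indicator (fun _ => Z * b)) :=
      (integrable_indicator_iff hKm).2 (integrableOn_const hKfin.ne)
    refine this.mono ?_ (Eventually.of_forall fun x => ?_)
    · exact (isBoundedBilinearMap_apply.continuous.measurable.comp
        (hζ'.measurable.prodMk hf)).aestronglyMeasurable
    · by_cases hx : x ∈ tsupport ζ
      · rw [indicator_of_mem hx]
        refine ((fderiv ℝ ζ x).le_opNorm _).trans ?_
        refine le_trans ?_ (le_abs_self _)
        exact mul_le_mul (hZ x) (hfb x) (norm_nonneg _) hZ0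
      · rw [hDz x hx]; simp
  have hextn : ∀ z, ‖z‖ ≤ 1 → ‖extPhi Φ z‖ ≤ 1 := by
    intro z hz
    unfold extPhi
    rw [norm_smul, Real.norm_of_nonneg (by positivity)]
    exact mul_le_one₀ (pow_le_one₀ (norm_nonneg _) hz) (norm_nonneg _) (h.h0 _)
  have hMsq : ∀ x, u x = 1 - ‖M x‖ ^ 2 := fun x => by
    rw [Complex.sq_norm, Complex.normSq_apply]; rfl
  have hu0 : ∀ x, 0 ≤ u x := fun x => by
    rw [hMsq]; nlinarith [hM1 x, norm_nonneg (M x)]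
  have hu1 : ∀ x, u x ≤ 1 := fun x => by
    rw [hMsq]; nlinarith [sq_nonneg ‖M x‖]
  have iF : Integrable (fun x => fderiv ℝ ζ x (F x)) := by
    refine iA F 3 hFdiff.continuous.measurable fun x => ?_
    refine (norm_add_le _ _).trans ?_
    rw [norm_smul, Real.norm_of_nonneg (hu0 x)]
    nlinarith [hextn _ (hM1 x), hu0 x, hu1 x, hP2 x, norm_nonneg (P x)]
  have im : Integrable (fun x => fderiv ℝ ζ x (extPhi Φ (m x))) :=
    iA _ 1 (hext.continuous.measurable.comp hm) fun x => hextn _ (hm1 x)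
  have err : |(∫ x, fderiv ℝ ζ x (extPhi Φ (m x))) - ∫ x, fderiv ℝ ζ x (F x)|
      ≤ 9 * Z * B * (4 * η * volume.real (tsupport ζ)
        + η ^ (1 - (2+α)) * ε * ∫ x, gE Ω m (2+α) ε x) := by
    rw [← integral_sub im iF]
    have j1 : Integrable ((tsupport ζ).indicator (fun _ => 4 * η)) :=
      (integrable_indicator_iff hKm).2 (integrableOn_const hKfin.ne)
    have j2 := gi.const_mul (η ^ (1 - (2+α)) * ε)
    have e1 : 9 * Z * B * (4 * η * volume.real (tsupport ζ)
        + η ^ (1 - (2+α)) * ε * ∫ x, gE Ω m (2+α) ε x)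
        = ∫ x, 9 * Z * B * ((tsupport ζ).indicator (fun _ => 4 * η) x
          + η ^ (1 - (2+α)) * ε * gE Ω m (2+α) ε x) := by
      rw [integral_const_mul, integral_add j1 j2, integral_const_mul, integral_indicator hKm]
      simp only [integral_const, MeasurableSet.univ, measureReal_restrict_apply, univ_inter, smul_eq_mul]
      ring
    rw [e1, ← Real.norm_eq_abs]
    refine norm_integral_le_of_norm_le ((j1.add j2).const_mul _) (Eventually.of_forall fun x => ?_)
    by_cases hx : x ∈ tsupport ζ
    · rw [indicator_of_mem hx, ← map_sub]
      have hxb := hK x hx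
      have hmx := hmΩ x (hζΩ hx)
      have c1 := cv_close hB hε hη (q := 2 + α) (by linarith) hk hm hm1 hxb
      have c2 : ‖extPhi Φ (m x) - F x‖ ≤ 9 * ‖M x - m x‖ := by
        have c3 := h.lip_ext (hm1 x) (hM1 x)
        rw [norm_sub_rev (m x)] at c3
        have c4 : ‖u x • P x‖ ≤ 4 * ‖M x - m x‖ := by
          rw [norm_smul, Real.norm_of_nonneg (hu0 x)]
          have c5 : 1 - ‖M x‖ ≤ ‖M x - m x‖ := by
            rw [norm_sub_rev, ← hmx]; exact norm_sub_norm_le _ _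
          have c6 : u x ≤ 2 * ‖M x - m x‖ := by
            rw [hMsq]; nlinarith [hM1 x, norm_nonneg (M x)]
          nlinarith [hu0 x, hP2 x, norm_nonneg (P x), norm_nonneg (M x - m x)]
        calc ‖extPhi Φ (m x) - F x‖ = ‖(extPhi Φ (m x) - extPhi Φ (M x)) - u x • P x‖ := by
              rw [hF]; congr 1; ring
          _ ≤ _ := norm_sub_le _ _
          _ ≤ _ := by linarith
      refine ((fderiv ℝ ζ x).le_opNorm _).trans ?_
      calc ‖fderiv ℝ ζ x‖ * ‖extPhi Φ (m x) - F x‖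
          ≤ Z * (9 * (B * (4 * η + η ^ (1 - (2 + α)) * ε * gE Ω m (2 + α) ε x))) := by
            refine mul_le_mul (hZ x) (c2.trans ?_) (norm_nonneg _) hZ0
            gcongr
        _ = _ := by ring
    · rw [indicator_of_notMem hx, hDz x hx]
      have := g0 x
      simp only [ContinuousLinearMap.zero_apply, sub_zero, norm_zero]
      positivity
  rw [e0]
  have := abs_sub_abs_le_abs_sub (∫ x, fderiv ℝ ζ x (extPhi Φ (m x))) (∫ x, fderiv ℝ ζ x (F x))
  linarith

theorem core {α : ℝ} (hα : α ∈ Ioo (0:ℝ) 1) {B : ℝ} (hB : 1 ≤ B)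
    (hker : ∀ ε : ℝ, 0 < ε → ∃ k, Ker B ε k) {Ω : Set ℂ} (hΩ : IsOpen Ω) {m : ℂ → ℂ}
    (hm : Measurable m) (hm1 : ∀ x, ‖m x‖ ≤ 1) (hmΩ : ∀ x ∈ Ω, ‖m x‖ = 1) (hdiv : DivFree Ω m)
    (hb : besovE Ω (2+α) (1/(2+α)) m < ⊤) :
    ∃ ν : Measure ℂ, ν univ ≤ 4 * besovE Ω (2+α) (1/(2+α)) m ^ (2+α) ∧
      ∀ Φ φ', EntData α Φ φ' → ∀ ζ, TestFun Ω ζ →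
        |∫ x in Ω, fderiv ℝ ζ x (Φ (m x))| ≤ 18000 * B ^ 3 * ∫ x, |ζ x| ∂ν := by
  have hα0 := hα.1
  have hq0 : 0 < 2 + α := by linarith
  set ε : ℕ → ℝ := fun n => 1 / ((n:ℝ) + 1) with hεdef
  have hε : ∀ n, 0 < ε n := fun n => Nat.one_div_pos_of_nat
  have hεt : Tendsto ε atTop (𝓝 0) := tendsto_one_div_add_atTop_nhds_zero_nat
  have hbq : 4 * besovE Ω (2+α) (1/(2+α)) m ^ (2+α) < ⊤ :=
    ENNReal.mul_lt_top (by simp) (ENNReal.rpow_lt_top_of_nonneg hq0.le hb.ne)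
  set Kc := (4 * besovE Ω (2+α) (1/(2+α)) m ^ (2+α)).toReal with hKc
  have hg := fun n => gE_facts hΩ hm hm1 hq0 (hε n) hb
  obtain ⟨ν, hν, hlim⟩ := exists_weak_limit (fun n => gE Ω m (2+α) (ε n)) Kc
    (fun n x => (hg n).1 x) (fun n => (hg n).2.1) (fun n => (hg n).2.2)
  refine ⟨ν, ?_, ?_⟩
  · rwa [hKc, ENNReal.ofReal_toReal hbq.ne] at hν
  intro Φ φ' h ζ hζ
  obtain ⟨Z, hZ⟩ := (hζ.2.1.fderiv ℝ).exists_bound_of_continuous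
    (hζ.1.continuous_fderiv (by simp))
  have hZ0 : 0 ≤ Z := (norm_nonneg _).trans (hZ 0)
  obtain ⟨δ, hδ, hδΩ⟩ := hζ.2.1.isCompact.exists_thickening_subset_open hΩ hζ.2.2
  have hKδ : ∀ x ∈ tsupport ζ, ball x δ ⊆ Ω := fun x hx =>
    (ball_subset_thickening hx δ).trans hδΩ
  have hcabs : HasCompactSupport (fun x => |ζ x|) := hζ.2.1.comp_left (g := fun t : ℝ => |t|) abs_zero
  have step : ∀ η : ℝ, 0 < η → |∫ x in Ω, fderiv ℝ ζ x (Φ (m x))|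
      ≤ 18000 * B ^ 3 * (∫ x, |ζ x| ∂ν)
        + 9 * Z * B * (4 * η * volume.real (tsupport ζ) + η ^ (1 - (2+α)) * 0 * Kc) := by
    intro η hη
    have t1 := (hlim (fun x => |ζ x|) hζ.1.continuous.abs hcabs).const_mul (18000 * B ^ 3)
    have hεh : Tendsto ε (hyperfilter ℕ : Filter ℕ) (𝓝 0) := hεt.mono_left Nat.hyperfilter_le_atTop
    have t2 := ((((hεh.const_mul (η ^ (1 - (2+α)))).mul_const Kc).const_add
      (4 * η * volume.real (tsupport ζ))).const_mul (9 * Z * B))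
    refine ge_of_tendsto (t1.add t2) ?_
    filter_upwards [hεh.eventually (gt_mem_nhds hδ)] with n hn
    obtain ⟨k, hk⟩ := hker (ε n) (hε n)
    refine (eps_est hα h hB (hε n) hη hk hΩ hm hm1 hmΩ hdiv hb hζ
      (fun x hx => (ball_subset_ball hn.le).trans (hKδ x hx)) hZ).trans ?_
    have := (hg n).2.2
    have := hε n
    gcongr
  have t3 : Tendsto (fun η : ℝ => 18000 * B ^ 3 * (∫ x, |ζ x| ∂ν)
        + 9 * Z * B * (4 * η * volume.real (tsupport ζ))) (𝓝[>] 0)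
        (𝓝 (18000 * B ^ 3 * (∫ x, |ζ x| ∂ν) + 9 * Z * B * (4 * 0 * volume.real (tsupport ζ)))) := by
    have : Continuous (fun η : ℝ => 18000 * B ^ 3 * (∫ x, |ζ x| ∂ν)
        + 9 * Z * B * (4 * η * volume.real (tsupport ζ))) := by fun_prop
    exact (this.tendsto 0).mono_left nhdsWithin_le_nhds
  have := ge_of_tendsto t3 (eventually_nhdsWithin_of_forall fun η hη => by
    have := step η hη
    simpa using this)
  simpa using this

theorem exists_good {Ω : Set ℂ} (hΩ : IsOpen Ω) {m : ℂ → ℂ}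
    (hm : AEStronglyMeasurable m (volume.restrict Ω))
    (hm1 : ∀ᵐ x ∂(volume.restrict Ω), ‖m x‖ = 1) :
    ∃ m' : ℂ → ℂ, Measurable m' ∧ (∀ x, ‖m' x‖ ≤ 1) ∧ (∀ x ∈ Ω, ‖m' x‖ = 1) ∧
      m' =ᵐ[volume.restrict Ω] m := by
  have hmm : Measurable (hm.mk m) := hm.stronglyMeasurable_mk.measurable
  have hs : MeasurableSet {x | ‖hm.mk m x‖ = 1} := hmm.norm (measurableSet_singleton 1)
  classical
  refine ⟨fun x => if ‖hm.mk m x‖ = 1 then hm.mk m x else 1,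
    Measurable.ite hs hmm measurable_const, fun x => ?_, fun x _ => ?_, ?_⟩
  · dsimp only; split_ifs with h <;> simp [h]
  · dsimp only; split_ifs with h <;> simp [h]
  · filter_upwards [hm.ae_eq_mk, hm1] with x h1 h2
    rw [if_pos (by rw [← h1]; exact h2), h1]

theorem besovE_congr {Ω : Set ℂ} (hΩ : IsOpen Ω) {m m' : ℂ → ℂ} (p s : ℝ)
    (h : m' =ᵐ[volume.restrict Ω] m) : besovE Ω p s m' = besovE Ω p s m := by
  unfold besovE
  congr 1; ext t
  congr 2
  have hms : MeasurableSet (Ω ∩ {x | x + t.1 ∈ Ω}) :=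
    hΩ.measurableSet.inter ((measurable_id.add_const t.1) hΩ.measurableSet)
  refine setLIntegral_congr_fun_ae hms ?_
  have h1 : ∀ᵐ x, x ∈ Ω → m' x = m x := (ae_restrict_iff' hΩ.measurableSet).1 h
  have h2 : ∀ᵐ x, x + t.1 ∈ Ω → m' (x + t.1) = m (x + t.1) :=
    (measurePreserving_add_right (volume : Measure ℂ) t.1).quasiMeasurePreserving.ae h1
  filter_upwards [h1, h2] with x a b hx
  rw [a hx.1, b hx.2]

theorem core' {α : ℝ} (hα : α ∈ Ioo (0:ℝ) 1) {B : ℝ} (hB : 1 ≤ B)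
    (hker : ∀ ε : ℝ, 0 < ε → ∃ k, Ker B ε k) {Ω : Set ℂ} (hΩ : IsOpen Ω) {m : ℂ → ℂ}
    (hm : AEStronglyMeasurable m (volume.restrict Ω))
    (hm1 : ∀ᵐ x ∂(volume.restrict Ω), ‖m x‖ = 1) (hdiv : DivFree Ω m)
    (hb : besovE Ω (2+α) (1/(2+α)) m < ⊤) :
    ∃ ν : Measure ℂ, ν univ ≤ 4 * besovE Ω (2+α) (1/(2+α)) m ^ (2+α) ∧
      ∀ Φ φ', EntData α Φ φ' → ∀ ζ, TestFun Ω ζ →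
        Integrable (fun x => fderiv ℝ ζ x (Φ (m x))) (volume.restrict Ω) ∧
        |∫ x in Ω, fderiv ℝ ζ x (Φ (m x))| ≤ 18000 * B ^ 3 * ∫ x, |ζ x| ∂ν := by
  obtain ⟨m', a, b, c, d⟩ := exists_good hΩ hm hm1
  have hi : ∀ (ζ : ℂ → ℝ) (Ψ : ℂ → ℂ), (fun x => fderiv ℝ ζ x (Ψ (m' x))) =ᵐ[volume.restrict Ω]
      (fun x => fderiv ℝ ζ x (Ψ (m x))) := by
    intro ζ Ψ
    filter_upwards [d] with x hx
    rw [hx]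
  have hdiv' : DivFree Ω m' := by
    intro ζ hζ
    exact (integral_congr_ae (hi ζ id)).trans (hdiv ζ hζ)
  have hb' := besovE_congr hΩ (2+α) (1/(2+α)) d
  obtain ⟨ν, h1, h2⟩ := core hα hB hker hΩ a b c hdiv' (by rw [hb']; exact hb)
  refine ⟨ν, by rw [← hb']; exact h1, fun Φ φ' h ζ hζ => ⟨?_, ?_⟩⟩
  · refine Integrable.congr ?_ (hi ζ Φ)
    have hext : Differentiable ℝ (extPhi Φ) := fun z => by
      obtain ⟨γ, -, h2⟩ := h.hasFDerivAt_ext z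
      exact h2.differentiableAt
    have hζ' : Continuous (fderiv ℝ ζ) := hζ.1.continuous_fderiv (by simp)
    have hn : Integrable (fun x => ‖fderiv ℝ ζ x‖) :=
      (hζ'.integrable_of_hasCompactSupport (hζ.2.1.fderiv ℝ)).norm
    have h3 : Integrable (fun x => fderiv ℝ ζ x (extPhi Φ (m' x))) (volume.restrict Ω) := by
      refine hn.restrict.mono ?_ (Eventually.of_forall fun x => ?_)
      · exact (isBoundedBilinearMap_apply.continuous.measurable.comp
          (hζ'.measurable.prodMk (hext.continuous.measurable.comp a))).aestronglyMeasurable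
      · rw [norm_norm]
        refine ((fderiv ℝ ζ x).le_opNorm _).trans ?_
        refine mul_le_of_le_one_right (norm_nonneg _) ?_
        unfold extPhi
        rw [norm_smul, Real.norm_of_nonneg (by positivity)]
        exact mul_le_one₀ (pow_le_one₀ (norm_nonneg _) (b x)) (norm_nonneg _) (h.h0 _)
    refine h3.congr ?_
    refine (ae_restrict_iff' hΩ.measurableSet).2 (Eventually.of_forall fun x hx => ?_)
    show fderiv ℝ ζ x (extPhi Φ (m' x)) = fderiv ℝ ζ x (Φ (m' x))
    rw [extPhi_of_norm_one Φ (c x hx)]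
  · rw [← integral_congr_ae (hi ζ Φ)]
    exact h2 Φ φ' h ζ hζ

theorem EntC1aBall.entData {α : ℝ} {Φ : ℂ → ℂ} (h : EntC1aBall α Φ) : ∃ φ', EntData α Φ φ' := by
  obtain ⟨φ', ⟨a, -, b⟩, c, d, e⟩ := h
  exact ⟨φ', a, b, c, d, e⟩

theorem statement1 (α : ℝ) (hα : α ∈ Set.Ioo (0:ℝ) 1) :
    ∃ C : ℝ, 0 < C ∧
    ∀ (Ω : Set ℂ), IsOpen Ω → IsBounded Ω →
    ∀ m : ℂ → ℂ, AEStronglyMeasurable m (volume.restrict Ω) →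
      (∀ᵐ x ∂(volume.restrict Ω), ‖m x‖ = 1) → DivFree Ω m →
      besovE Ω (2+α) (1/(2+α)) m < ⊤ →
      (∀ Φ : ℂ → ℂ, EntC1aBall α Φ → ∃ μ : MeasureTheory.SignedMeasure ℂ, RepresentsDiv Ω m Φ μ) ∧
      entVarC1a α Ω m Ω ≤ ENNReal.ofReal C * besovNormE Ω (2+α) (1/(2+α)) m ^ (2+α) := by
  obtain ⟨B, hB, hker⟩ := exists_ker
  have hα0 := hα.1
  have hq0 : 0 < 2 + α := by linarith
  set C1 : ℝ := 18000 * B ^ 3 with hC1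
  have hC10 : 0 < C1 := by positivity
  refine ⟨4 * C1, by positivity, ?_⟩
  intro Ω hΩ _ m hm hm1 hdiv hb
  obtain ⟨ν₀, hν₀, hest⟩ := core' hα hB hker hΩ hm hm1 hdiv hb
  have hbq : 4 * besovE Ω (2+α) (1/(2+α)) m ^ (2+α) < ⊤ :=
    ENNReal.mul_lt_top (by simp) (ENNReal.rpow_lt_top_of_nonneg hq0.le hb.ne)
  haveI : IsFiniteMeasure ν₀ := ⟨hν₀.trans_lt hbq⟩
  set ν : Measure ℂ := C1.toNNReal • ν₀ with hν
  have hIntg : ∀ f : ℂ → ℝ, ∫ x, f x ∂ν = C1 * ∫ x, f x ∂ν₀ := by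
    intro f
    rw [hν, integral_smul_nnreal_measure, NNReal.smul_def, Real.coe_toNNReal _ hC10.le, smul_eq_mul]
  have hest' : ∀ Φ, EntC1aBall α Φ → ∀ ζ, TestFun Ω ζ →
      |∫ x in Ω, fderiv ℝ ζ x (Φ (m x))| ≤ ∫ x, |ζ x| ∂ν := by
    intro Φ hΦ ζ hζ
    obtain ⟨φ', h⟩ := hΦ.entData
    rw [hIntg]
    exact (hest Φ φ' h ζ hζ).2
  constructor
  · intro Φ hΦ
    obtain ⟨φ', h⟩ := hΦ.entData
    let T : testSub Ω →ₗ[ℝ] ℝ :=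
      { toFun := fun ζ => -∫ x in Ω, fderiv ℝ ζ.1 x (Φ (m x))
        map_add' := by
          intro ζ ξ
          rw [← neg_add, ← integral_add (hest Φ φ' h ζ.1 ζ.2).1 (hest Φ φ' h ξ.1 ξ.2).1]
          congr 2; ext x
          have h1 : fderiv ℝ (ζ + ξ : testSub Ω).1 x = fderiv ℝ ζ.1 x + fderiv ℝ ξ.1 x :=
            fderiv_add (ζ.2.1.differentiable (by simp) x) (ξ.2.1.differentiable (by simp) x)
          rw [h1]; rfl
        map_smul' := by
          intro c ζ
          rw [RingHom.id_apply, smul_eq_mul, mul_neg, ← integral_const_mul]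
          congr 2; ext x
          have h1 : fderiv ℝ (c • ζ : testSub Ω).1 x = c • fderiv ℝ ζ.1 x :=
            fderiv_const_smul (ζ.2.1.differentiable (by simp) x) c
          rw [h1]; rfl }
    obtain ⟨μ, hμ⟩ := exists_repr ν T (fun ζ => by
      show |-∫ x in Ω, fderiv ℝ ζ.1 x (Φ (m x))| ≤ _
      rw [abs_neg]
      exact hest' Φ hΦ ζ.1 ζ.2)
    exact ⟨μ, fun ζ hζ => hμ ⟨ζ, hζ⟩⟩
  · have key : entVarC1a α Ω m ≤ ν + ((⊤ : ℝ≥0∞) • (Measure.count : Measure ℂ)).restrict Ωᶜ := by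
      refine iSup_le fun Φ => iSup_le fun μ => ?_
      refine Measure.le_iff.2 fun A hA => ?_
      have htv : ∀ A, MeasurableSet A → A ⊆ Ω → μ.1.totalVariation A ≤ ν A := fun A hA hAΩ =>
        tv_le hΩ μ.1 ν (fun ζ hζ => by
          rw [← μ.2 ζ hζ, abs_neg]
          exact hest' Φ.1 Φ.2 ζ hζ) hA hAΩ
      by_cases hAΩ : A ⊆ Ω
      · exact (htv A hA hAΩ).trans (Measure.le_add_right le_rfl A)
      · have h1 : (A ∩ Ωᶜ).Nonempty := by
          obtain ⟨x, hx, hx'⟩ := not_subset.1 hAΩ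
          exact ⟨x, hx, hx'⟩
        have h2 : (((⊤ : ℝ≥0∞) • (Measure.count : Measure ℂ)).restrict Ωᶜ) A = ⊤ := by
          rw [Measure.restrict_apply hA, Measure.smul_apply, smul_eq_mul]
          exact ENNReal.top_mul (Measure.count_ne_zero h1)
        rw [Measure.add_apply, h2, add_top]
        exact le_top
    refine (key Ω).trans ?_
    rw [Measure.add_apply, Measure.restrict_apply hΩ.measurableSet, inter_compl_self,
      measure_empty, add_zero]
    calc ν Ω ≤ ν univ := measure_mono (subset_univ _)
      _ = ENNReal.ofReal C1 * ν₀ univ := by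
          rw [hν, Measure.smul_apply]; rfl
      _ ≤ ENNReal.ofReal C1 * (4 * besovE Ω (2+α) (1/(2+α)) m ^ (2+α)) := by gcongr
      _ = ENNReal.ofReal (4 * C1) * besovE Ω (2+α) (1/(2+α)) m ^ (2+α) := by
          have e : ENNReal.ofReal (4 * C1) = 4 * ENNReal.ofReal C1 := by
            rw [ENNReal.ofReal_mul (p := 4) (by norm_num)]
            congr 1
            norm_num
          rw [e]
          ring
      _ ≤ _ := by
          gcongr
          exact le_add_self

end Eikonal
end
end

section
/- There is a universal constant C > 0 with the following property. Let Ω ⊂ ℝ² be open, m : Ω → S¹ measurable, ρ a mollifier as in the context, ε > 0, and x ∈ Ω with B_{2ε}(x) ⊂ Ω. Then the commutator w_ε = 1 − |m_ε|² satisfies |w_ε(x)| ≤ C ⨍_{B_ε} |D^h m(x)|² dh, and for every k ∈ ℝ² with |k| ≤ 1, |w_ε(x + εk) − w_ε(x)| ≤ C |k| ⨍_{B_{2ε}} |D^h m(x)|² dh. -/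
open MeasureTheory Metric Filter Set Bornology
open scoped ENNReal NNReal Topology Real

noncomputable section

namespace Eikonal

/-! ## STATEMENT 2 -/


section Helpers

variable {μ : Measure ℂ} [IsFiniteMeasure μ]

lemma aux_bdd {f : ℂ → ℂ} (hf : AEStronglyMeasurable f μ) (h1 : ∀ᵐ y ∂μ, ‖f y‖ = 1)
    {K : ℂ → ℝ} (hK : Continuous K) {M : ℝ} (hM : ∀ y, |K y| ≤ M) (c : ℂ) :
    Integrable K μ ∧ Integrable f μ ∧ Integrable (fun y => f y - c) μ ∧
    Integrable (fun y => ‖f y - c‖ ^ 2) μ ∧ Integrable (fun y => K y • f y) μ ∧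
    Integrable (fun y => K y • (f y - c)) μ ∧ Integrable (fun y => K y * ‖f y - c‖ ^ 2) μ := by
  have iK : Integrable K μ := by
    refine Integrable.of_bound hK.aestronglyMeasurable M (Eventually.of_forall fun y => ?_)
    simpa using hM y
  have iF : Integrable f μ := by
    refine Integrable.of_bound hf 1 ?_
    filter_upwards [h1] with y hy using hy.le
  have iu : Integrable (fun y => f y - c) μ := iF.sub (integrable_const c)
  have iu2 : Integrable (fun y => ‖f y - c‖ ^ 2) μ := by
    refine Integrable.of_bound (iu.1.norm.pow 2) ((1 + ‖c‖) ^ 2) ?_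
    filter_upwards [h1] with y hy
    rw [Real.norm_of_nonneg (by positivity)]
    gcongr
    calc ‖f y - c‖ ≤ ‖f y‖ + ‖c‖ := norm_sub_le _ _
      _ = 1 + ‖c‖ := by rw [hy]
  have hb : ∀ᵐ y ∂μ, ‖K y‖ ≤ M := Eventually.of_forall fun y => by simpa using hM y
  refine ⟨iK, iF, iu, iu2, ?_, ?_, ?_⟩
  · exact iF.bdd_smul M hK.aestronglyMeasurable hb
  · exact iu.bdd_smul M hK.aestronglyMeasurable hb
  · exact iu2.bdd_mul hK.aestronglyMeasurable hb

lemma aux_var {f : ℂ → ℂ} (hf : AEStronglyMeasurable f μ) (h1 : ∀ᵐ y ∂μ, ‖f y‖ = 1)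
    {K : ℂ → ℝ} (hK : Continuous K) {M : ℝ} (hM : ∀ y, |K y| ≤ M)
    (hI : ∫ y, K y ∂μ = 1) (c : ℂ) :
    1 - ‖∫ y, K y • f y ∂μ‖ ^ 2
      = (∫ y, K y * ‖f y - c‖ ^ 2 ∂μ) - ‖∫ y, K y • (f y - c) ∂μ‖ ^ 2 := by
  obtain ⟨iK, iF, iu, iu2, iKf, iKu, iKu2⟩ := aux_bdd hf h1 hK hM c
  set U := ∫ y, K y • (f y - c) ∂μ with hU
  have e1 : ∫ y, K y • f y ∂μ = c + U := by
    have : ∫ y, K y • f y ∂μ = ∫ y, (K y • c + K y • (f y - c)) ∂μ := by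
      congr 1; ext1 y; rw [← smul_add]; congr 1; ring
    rw [this, integral_add (iK.smul_const c) iKu, integral_smul_const, hI, one_smul]
  have e2 : (1:ℝ) = ‖c‖ ^ 2 + 2 * inner ℝ c U + ∫ y, K y * ‖f y - c‖ ^ 2 ∂μ := by
    have i1 : Integrable (fun y => inner ℝ c (K y • (f y - c))) μ := iKu.const_inner c
    have : ∫ y, K y ∂μ = ∫ y, (K y * ‖c‖ ^ 2 + 2 * inner ℝ c (K y • (f y - c)))
        + K y * ‖f y - c‖ ^ 2 ∂μ := by
      refine integral_congr_ae ?_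
      filter_upwards [h1] with y hy
      have : ‖f y‖ ^ 2 = ‖c‖ ^ 2 + 2 * inner ℝ c (f y - c) + ‖f y - c‖ ^ 2 := by
        rw [← norm_add_sq_real]; congr 2; ring
      rw [hy] at this
      rw [inner_smul_right]
      linear_combination (K y) * this
    have i2 : Integrable (fun y => K y * ‖c‖ ^ 2 + 2 * inner ℝ c (K y • (f y - c))) μ :=
      (iK.mul_const _).add (i1.const_mul 2)
    rw [integral_add i2 iKu2,
      integral_add (iK.mul_const _) (i1.const_mul 2), integral_mul_const, integral_const_mul,
      integral_inner iKu, hI] at this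
    linarith
  rw [e1, norm_add_sq_real]
  linarith

lemma aux_cs {g : ℂ → ℝ} (hg : Integrable g μ) (hg2 : Integrable (fun y => g y ^ 2) μ) :
    (∫ y, g y ∂μ) ^ 2 ≤ μ.real univ * ∫ y, g y ^ 2 ∂μ := by
  set A := ∫ y, g y ∂μ
  set V := μ.real univ
  set Q := ∫ y, g y ^ 2 ∂μ
  have hV : 0 ≤ V := measureReal_nonneg
  have key : ∀ t : ℝ, 0 ≤ Q - 2 * t * A + t ^ 2 * V := by
    intro t
    have h0 : 0 ≤ ∫ y, (g y - t) ^ 2 ∂μ := integral_nonneg fun y => sq_nonneg _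
    have : ∫ y, (g y - t) ^ 2 ∂μ = ∫ y, (g y ^ 2 - 2 * t * g y) + t ^ 2 ∂μ := by
      congr 1; ext1 y; ring
    have i2 : Integrable (fun y => g y ^ 2 - 2 * t * g y) μ := hg2.sub (hg.const_mul _)
    rw [this, integral_add i2 (integrable_const _),
      integral_sub hg2 (hg.const_mul _), integral_const_mul, integral_const, smul_eq_mul] at h0
    linarith
  have hd := discrim_le_zero (a := V) (b := -2 * A) (c := Q) (fun t => by
    have := key t; nlinarith)
  unfold discrim at hd
  nlinarith

lemma aux_one {f : ℂ → ℂ} (hf : AEStronglyMeasurable f μ) (h1 : ∀ᵐ y ∂μ, ‖f y‖ = 1)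
    {K : ℂ → ℝ} (hK : Continuous K) {M : ℝ} (hK0 : ∀ y, 0 ≤ K y) (hM : ∀ y, |K y| ≤ M)
    (hI : ∫ y, K y ∂μ = 1) (c : ℂ) :
    |1 - ‖∫ y, K y • f y ∂μ‖ ^ 2| ≤ M * ∫ y, ‖f y - c‖ ^ 2 ∂μ := by
  obtain ⟨iK, iF, iu, iu2, iKf, iKu, iKu2⟩ := aux_bdd hf h1 hK hM c
  have hle : ‖∫ y, K y • f y ∂μ‖ ≤ 1 := by
    rw [← hI]
    refine norm_integral_le_of_norm_le iK ?_
    filter_upwards [h1] with y hy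
    rw [norm_smul, hy, mul_one, Real.norm_of_nonneg (hK0 y)]
  rw [abs_of_nonneg (by nlinarith [norm_nonneg (∫ y, K y • f y ∂μ)]),
    aux_var hf h1 hK hM hI c, ← integral_const_mul]
  have : ∫ y, K y * ‖f y - c‖ ^ 2 ∂μ ≤ ∫ y, M * ‖f y - c‖ ^ 2 ∂μ := by
    refine integral_mono iKu2 (iu2.const_mul M) fun y => ?_
    exact mul_le_mul_of_nonneg_right ((le_abs_self _).trans (hM y)) (by positivity)
  nlinarith [sq_nonneg ‖∫ y, K y • (f y - c) ∂μ‖]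

lemma aux_two {f : ℂ → ℂ} (hf : AEStronglyMeasurable f μ) (h1 : ∀ᵐ y ∂μ, ‖f y‖ = 1)
    {K L : ℂ → ℝ} (hK : Continuous K) (hL : Continuous L) {M δ : ℝ}
    (hM : ∀ y, |K y| ≤ M) (hM' : ∀ y, |L y| ≤ M) (hδ : ∀ y, |K y - L y| ≤ δ)
    (hI : ∫ y, K y ∂μ = 1) (hJ : ∫ y, L y ∂μ = 1) (c : ℂ) :
    |(1 - ‖∫ y, K y • f y ∂μ‖ ^ 2) - (1 - ‖∫ y, L y • f y ∂μ‖ ^ 2)|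
      ≤ (δ + 2 * M * δ * μ.real univ) * ∫ y, ‖f y - c‖ ^ 2 ∂μ := by
  obtain ⟨iK, iF, iu, iu2, iKf, iKu, iKu2⟩ := aux_bdd hf h1 hK hM c
  obtain ⟨iL, -, -, -, iLf, iLu, iLu2⟩ := aux_bdd hf h1 hL hM' c
  have hM0 : 0 ≤ M := (abs_nonneg _).trans (hM 0)
  have hδ0 : 0 ≤ δ := (abs_nonneg _).trans (hδ 0)
  have cs := aux_cs iu.norm iu2
  set A := ∫ y, ‖f y - c‖ ∂μ
  set Q := ∫ y, ‖f y - c‖ ^ 2 ∂μ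
  have hA : 0 ≤ A := integral_nonneg fun y => norm_nonneg _
  have gen : ∀ (g : ℂ → ℝ) (b : ℝ), (∀ y, |g y| ≤ b) → ‖∫ y, g y • (f y - c) ∂μ‖ ≤ b * A := by
    intro g b hb
    rw [← integral_const_mul]
    refine norm_integral_le_of_norm_le (iu.norm.const_mul b) (Eventually.of_forall fun y => ?_)
    rw [norm_smul, Real.norm_eq_abs]
    exact mul_le_mul_of_nonneg_right (hb y) (norm_nonneg _)
  rw [aux_var hf h1 hK hM hI c, aux_var hf h1 hL hM' hJ c]
  have b1 := gen K M hM
  have b2 := gen L M hM'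
  have b3 := gen (fun y => K y - L y) δ hδ
  have e3 : ∫ y, (K y - L y) • (f y - c) ∂μ
      = (∫ y, K y • (f y - c) ∂μ) - ∫ y, L y • (f y - c) ∂μ := by
    rw [← integral_sub iKu iLu]; congr 1; ext1 y; rw [sub_smul]
  rw [e3] at b3
  have b4 : |(∫ y, K y * ‖f y - c‖ ^ 2 ∂μ) - ∫ y, L y * ‖f y - c‖ ^ 2 ∂μ| ≤ δ * Q := by
    rw [← integral_sub iKu2 iLu2, ← integral_const_mul, ← Real.norm_eq_abs]
    refine norm_integral_le_of_norm_le (iu2.const_mul δ) (Eventually.of_forall fun y => ?_)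
    rw [← sub_mul, norm_mul, Real.norm_eq_abs, Real.norm_of_nonneg (by positivity)]
    exact mul_le_mul_of_nonneg_right (hδ y) (by positivity)
  set P := ∫ y, K y • (f y - c) ∂μ
  set R := ∫ y, L y • (f y - c) ∂μ
  have b5 : |‖P‖ ^ 2 - ‖R‖ ^ 2| ≤ 2 * M * δ * A ^ 2 := by
    have : ‖P‖ ^ 2 - ‖R‖ ^ 2 = (‖P‖ - ‖R‖) * (‖P‖ + ‖R‖) := by ring
    rw [this, abs_mul, abs_of_nonneg (by positivity : 0 ≤ ‖P‖ + ‖R‖)]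
    calc |‖P‖ - ‖R‖| * (‖P‖ + ‖R‖) ≤ (δ * A) * (M * A + M * A) := by
          gcongr
          exact (abs_norm_sub_norm_le P R).trans b3
      _ = 2 * M * δ * A ^ 2 := by ring
  have b6 : 2 * M * δ * A ^ 2 ≤ 2 * M * δ * (μ.real univ * Q) := by gcongr
  rw [abs_le] at b4 b5 ⊢
  constructor <;> nlinarith [b4.1, b4.2, b5.1, b5.2]

end Helpers

lemma moll_lip {ρ : ℂ → ℝ} (hρ : Mollifier ρ) (a b : ℂ) : |ρ a - ρ b| ≤ 2 * ‖a - b‖ := by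
  obtain ⟨hc, -, -, -, -, hd⟩ := hρ
  have := Convex.norm_image_sub_le_of_norm_fderiv_le (𝕜 := ℝ) (f := ρ) (s := univ) (C := 2)
    (fun z _ => (hc.differentiable (by norm_num)) z) (fun z _ => hd z) convex_univ
    (mem_univ b) (mem_univ a)
  simpa using this

lemma moll_zero {ρ : ℂ → ℝ} (hρ : Mollifier ρ) {a : ℂ} (ha : 1 ≤ ‖a‖) : ρ a = 0 := by
  by_contra h
  have : a ∈ Metric.ball (0:ℂ) 1 := hρ.2.2.1 (subset_tsupport _ h)
  rw [mem_ball_zero_iff] at this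
  linarith

lemma moll_le {ρ : ℂ → ℝ} (hρ : Mollifier ρ) (a : ℂ) : |ρ a| ≤ 4 := by
  by_cases ha : 1 ≤ ‖a‖
  · rw [moll_zero hρ ha]; norm_num
  · have h := moll_lip hρ a 1
    rw [moll_zero hρ (a := 1) (by simp), sub_zero] at h
    have : ‖a - 1‖ ≤ ‖a‖ + ‖(1:ℂ)‖ := norm_sub_le _ _
    rw [norm_one] at this
    linarith [not_le.1 ha]

/-- The rescaled, recentred kernel. -/
def ker (ρ : ℂ → ℝ) (ε : ℝ) (k h : ℂ) : ℝ := (ε ^ 2)⁻¹ * ρ (k - ε⁻¹ • h)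

lemma ker_zero {ρ : ℂ → ℝ} (hρ : Mollifier ρ) {ε : ℝ} (hε : 0 < ε) {k h : ℂ} {R : ℝ}
    (hR : (1 + ‖k‖) * ε ≤ R) (hh : h ∉ Metric.ball (0:ℂ) R) : ker ρ ε k h = 0 := by
  unfold ker
  rw [moll_zero hρ, mul_zero]
  rw [mem_ball_zero_iff, not_lt] at hh
  have h1 : 1 + ‖k‖ ≤ ‖ε⁻¹ • h‖ := by
    rw [norm_smul, Real.norm_of_nonneg (by positivity), inv_mul_eq_div, le_div_iff₀ hε]
    linarith
  have := norm_sub_norm_le (ε⁻¹ • h) k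
  rw [norm_sub_rev] at this
  linarith

lemma ker_int {ρ : ℂ → ℝ} (hρ : Mollifier ρ) {ε : ℝ} (hε : 0 < ε) (k : ℂ) {R : ℝ}
    (hR : (1 + ‖k‖) * ε ≤ R) : ∫ h in Metric.ball (0:ℂ) R, ker ρ ε k h = 1 := by
  rw [setIntegral_eq_integral_of_forall_compl_eq_zero (fun h hh => ker_zero hρ hε hR hh)]
  unfold ker
  rw [integral_const_mul, Measure.integral_comp_smul volume (fun y => ρ (k - y)) ε⁻¹,
    integral_sub_left_eq_self ρ volume k, hρ.2.2.2.2.1, Complex.finrank_real_complex, smul_eq_mul,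
    abs_of_nonneg (by positivity)]
  field_simp

lemma ker_moll {ρ : ℂ → ℝ} (hρ : Mollifier ρ) {ε : ℝ} (hε : 0 < ε) (k : ℂ) {R : ℝ}
    (hR : (1 + ‖k‖) * ε ≤ R) (m : ℂ → ℂ) (x : ℂ) :
    mollify ρ ε m (x + ε • k) = ∫ h in Metric.ball (0:ℂ) R, ker ρ ε k h • m (x + h) := by
  rw [setIntegral_eq_integral_of_forall_compl_eq_zero
    (fun h hh => by rw [ker_zero hρ hε hR hh, zero_smul])]
  unfold mollify ker
  rw [← integral_sub_left_eq_self _ volume (ε • k)]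
  congr 1; ext1 h
  rw [smul_sub, smul_smul, inv_mul_cancel₀ hε.ne', one_smul]
  congr 2
  ring

lemma ker_cont {ρ : ℂ → ℝ} (hρ : Mollifier ρ) (ε : ℝ) (k : ℂ) : Continuous (ker ρ ε k) := by
  have := hρ.1.continuous
  unfold ker
  fun_prop

lemma ker_le {ρ : ℂ → ℝ} (hρ : Mollifier ρ) (ε : ℝ) (k h : ℂ) :
    |ker ρ ε k h| ≤ (ε ^ 2)⁻¹ * 4 := by
  unfold ker
  rw [abs_mul, abs_of_nonneg (by positivity : 0 ≤ (ε ^ 2)⁻¹)]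
  gcongr
  exact moll_le hρ _

lemma ker_lip {ρ : ℂ → ℝ} (hρ : Mollifier ρ) (ε : ℝ) (k h : ℂ) :
    |ker ρ ε k h - ker ρ ε 0 h| ≤ (ε ^ 2)⁻¹ * (2 * ‖k‖) := by
  unfold ker
  rw [← mul_sub, abs_mul, abs_of_nonneg (by positivity : 0 ≤ (ε ^ 2)⁻¹)]
  gcongr
  simpa using moll_lip hρ (k - ε⁻¹ • h) (0 - ε⁻¹ • h)

lemma vol_ball {R : ℝ} (hR : 0 ≤ R) :
    (volume : Measure ℂ).real (Metric.ball (0:ℂ) R) = R ^ 2 * π := by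
  rw [measureReal_def, Complex.volume_ball]
  simp [hR]

lemma ae_shift {Ω : Set ℂ} {m : ℂ → ℂ} (h1 : ∀ᵐ x ∂(volume.restrict Ω), ‖m x‖ = 1)
    {x : ℂ} {R : ℝ} (hx : Metric.ball x R ⊆ Ω) :
    ∀ᵐ h ∂(volume.restrict (Metric.ball (0:ℂ) R)), ‖m (x + h)‖ = 1 := by
  have h2 : ∀ᵐ y ∂(volume.restrict (Metric.ball x R)), ‖m y‖ = 1 :=
    ae_mono (Measure.restrict_mono hx le_rfl) h1
  rw [ae_restrict_iff' measurableSet_ball] at h2 ⊢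
  have h3 := (measurePreserving_add_left (volume : Measure ℂ) x).quasiMeasurePreserving.ae h2
  filter_upwards [h3] with h hh hb
  apply hh
  rw [mem_ball_zero_iff] at hb
  simpa [mem_ball_iff_norm] using hb

theorem statement2 :
    ∃ C : ℝ, 0 < C ∧
    ∀ (Ω : Set ℂ), IsOpen Ω →
    ∀ m : ℂ → ℂ, Measurable m → (∀ᵐ x ∂(volume.restrict Ω), ‖m x‖ = 1) →
    ∀ ρ : ℂ → ℝ, Mollifier ρ → ∀ ε : ℝ, 0 < ε →
    ∀ x : ℂ, Metric.ball x (2*ε) ⊆ Ω →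
      (|1 - ‖mollify ρ ε m x‖^2| ≤ C * ⨍ h in Metric.ball (0:ℂ) ε, ‖m (x+h) - m x‖^2) ∧
      ∀ k : ℂ, ‖k‖ ≤ 1 →
        |(1 - ‖mollify ρ ε m (x + ε • k)‖^2) - (1 - ‖mollify ρ ε m x‖^2)|
          ≤ C * ‖k‖ * ⨍ h in Metric.ball (0:ℂ) (2*ε), ‖m (x+h) - m x‖^2 := by
  refine ⟨8 * π * (1 + 32 * π), by positivity, ?_⟩
  intro Ω _ m hm h1 ρ hρ ε hε x hx
  have hms : Measurable (fun h => m (x + h)) := hm.comp (measurable_const_add x)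
  have avg : ∀ R : ℝ, 0 < R → ∫ h in Metric.ball (0:ℂ) R, ‖m (x+h) - m x‖^2
      = R ^ 2 * π * ⨍ h in Metric.ball (0:ℂ) R, ‖m (x+h) - m x‖^2 := by
    intro R hR
    rw [setAverage_eq, vol_ball hR.le, smul_eq_mul]
    field_simp
  have avg0 : ∀ R : ℝ, 0 < R → 0 ≤ ⨍ h in Metric.ball (0:ℂ) R, ‖m (x+h) - m x‖^2 := by
    intro R hR
    rw [setAverage_eq, smul_eq_mul]
    exact mul_nonneg (by positivity) (integral_nonneg fun y => by positivity)
  have fin : ∀ R : ℝ, IsFiniteMeasure ((volume : Measure ℂ).restrict (Metric.ball (0:ℂ) R)) :=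
    fun R => ⟨by rw [Measure.restrict_apply_univ]; exact measure_ball_lt_top⟩
  have ker0 : ∀ k h, 0 ≤ ker ρ ε k h := fun k h => by
    have := hρ.2.2.2.1 (k - ε⁻¹ • h)
    unfold ker; positivity
  have hz : x + ε • (0:ℂ) = x := by simp
  constructor
  · have hR : (1 + ‖(0:ℂ)‖) * ε ≤ ε := by simp
    have := fin ε
    have h := aux_one (μ := volume.restrict (Metric.ball (0:ℂ) ε)) hms.aestronglyMeasurable
      (ae_shift h1 ((Metric.ball_subset_ball (by linarith)).trans hx))
      (ker_cont hρ ε 0) (ker0 0) (ker_le hρ ε 0) (ker_int hρ hε 0 hR) (m x)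
    rw [← ker_moll hρ hε 0 hR m x, hz, avg ε hε] at h
    refine h.trans ?_
    have e : (ε ^ 2)⁻¹ * 4 * (ε ^ 2 * π * ⨍ h in Metric.ball (0:ℂ) ε, ‖m (x+h) - m x‖^2)
        = 4 * π * ⨍ h in Metric.ball (0:ℂ) ε, ‖m (x+h) - m x‖^2 := by
      field_simp
    rw [e]
    refine mul_le_mul_of_nonneg_right ?_ (avg0 ε hε)
    nlinarith [Real.pi_pos]
  · intro k hk
    have hR : (1 + ‖k‖) * ε ≤ 2 * ε := by gcongr; linarith
    have hR0 : (1 + ‖(0:ℂ)‖) * ε ≤ 2 * ε := by simp; linarith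
    have := fin (2 * ε)
    have h := aux_two (μ := volume.restrict (Metric.ball (0:ℂ) (2 * ε)))
      hms.aestronglyMeasurable (ae_shift h1 hx)
      (ker_cont hρ ε k) (ker_cont hρ ε 0) (ker_le hρ ε k) (ker_le hρ ε 0) (ker_lip hρ ε k)
      (ker_int hρ hε k hR) (ker_int hρ hε 0 hR0) (m x)
    rw [← ker_moll hρ hε k hR m x, ← ker_moll hρ hε 0 hR0 m x, hz, avg (2 * ε) (by positivity),
      measureReal_restrict_apply_univ, vol_ball (by positivity)] at h
    refine h.trans (le_of_eq ?_)
    field_simp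
    ring

end Eikonal
end
end
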